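/- For each N ≥ 1, let X₁, …, X_N and Y₁, …, Y_N be 2N independent uniform random variables on [0,1]; run the greedy algorithm closest with threshold r = ∞ (so every arriving point is matched to the nearest free offline point) with offline set {X₁, …, X_N} on the arrival sequence Y₁, Y₂, …, and let ρ_N(t) be the total length of the matching after ⌊tN⌋ arrivals, i.e., the sum over the first ⌊tN⌋ arrivals of the distance between each arriving point and the offline point it is matched to. Then for every fixed t ∈ [0,1), ρ_N(t) converges in probability, as N → ∞, to (1/2)·(1/(1−t) − 1). -/

import Mathlib

open MeasureTheory
open scoped ENNReal

/-- One step of the greedy algorithm `closest` with threshold `r ∈ (0, ∞]`. -/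
noncomputable def closestStep (r : ℝ≥0∞) (S : Finset ℝ) (y : ℝ) : Finset ℝ × Option ℝ :=
  if h : (S.filter fun x => ENNReal.ofReal |x - y| < r).Nonempty then
    let x0 := (((S.filter fun x => ENNReal.ofReal |x - y| < r)).filter
        (fun x => |x - y| =
          (S.filter fun x => ENNReal.ofReal |x - y| < r).inf' h fun x => |x - y|)).min'
      (by
        obtain ⟨b, hb, he⟩ :=
          Finset.exists_mem_eq_inf' h (fun x : ℝ => |x - y|)
        exact ⟨b, Finset.mem_filter.2 ⟨hb, he.symm⟩⟩)
    (S.erase x0, some x0)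
  else (S, none)

/-- The state of the greedy algorithm `closest` after the first `m` arrivals:
free offline points, number of matched online points, total matching length. -/
noncomputable def closestState (r : ℝ≥0∞) (X : Finset ℝ) (y : ℕ → ℝ) : ℕ → Finset ℝ × ℕ × ℝ
  | 0 => (X, 0, 0)
  | m + 1 =>
    match closestStep r (closestState r X y m).1 (y m) with
    | (S', none) => (S', (closestState r X y m).2.1, (closestState r X y m).2.2)
    | (S', some x) =>
        (S', (closestState r X y m).2.1 + 1, (closestState r X y m).2.2 + |x - y m|)

/-- Total length of the matching built by `closest` after the first `m` arrivals,
i.e. the sum over matched arrivals of the distance to the matched offline point. -/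
noncomputable def closestLength (r : ℝ≥0∞) (X : Finset ℝ) (y : ℕ → ℝ) (m : ℕ) : ℝ :=
  (closestState r X y m).2.2

/-- The product of `N` copies of the uniform distribution on `[0,1]`. -/
noncomputable def unifCube (N : ℕ) : Measure (Fin N → ℝ) :=
  Measure.pi fun _ => volume.restrict (Set.Icc 0 1)

/-!
Listed in increasing order and padded by `0` and `1`, the free points are described by their gaps.
An arrival that is uniform on `[0, 1]` merges two neighbouring gaps, with probability half their
total length up to a boundary term, and this size-biased choice of a pair preserves the
exchangeability of the interior gaps. So when `n` of the `N` points are free, the expected effect of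
an arrival on the sum `S` of the squared gaps and on its square is explicit up to powers of the
largest gap, which are controlled by the sum of the eighth powers of the gaps. It follows that
`n ^ 2 * S / N` stays close to its initial value `2` in mean square. Given the past, the next match
has expected length `S / 4` up to boundary terms, close to `N / (2 * n * (n - 1))`, and the
fluctuations around these conditional expectations form a martingale of small variance. Finally, the
sum of `N / (2 * n * (n - 1))` over the arrivals telescopes to the limit.
-/

namespace GreedyMatching

open Finset

/-! ### Configurations of free points -/

/-- A configuration of `n` free points in `(0, 1)`, listed increasingly as `p 1 < ⋯ < p n` and
padded by `p 0 = 0` and `p j = 1` for `j > n`, so that the boundary gaps need no separate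
treatment. -/
structure IsConfig (n : ℕ) (p : ℕ → ℝ) : Prop where
  zero : p 0 = 0
  one : ∀ j, n < j → p j = 1
  lt_succ : ∀ i ≤ n, p i < p (i + 1)

/-- The `i`-th gap of a sequence; a configuration of `n` points has the gaps `0, …, n`. -/
def gap (p : ℕ → ℝ) (i : ℕ) : ℝ := p (i + 1) - p i

/-- Removal of the point `p (i + 1)`, which merges the gaps `i` and `i + 1`. -/
def mergeAt (i : ℕ) (p : ℕ → ℝ) : ℕ → ℝ := fun k => if k ≤ i then p k else p (k + 1)

/-- The set of free points of a configuration of `n` points. -/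
noncomputable def pointSet (n : ℕ) (p : ℕ → ℝ) : Finset ℝ := (range n).image fun i => p (i + 1)

/-- The boundaries of the Voronoi cells in `[0, 1]` of a configuration of `n` points: the cell of
`p (i + 1)` lies between `bisector n p i` and `bisector n p (i + 1)`. -/
noncomputable def bisector (n : ℕ) (p : ℕ → ℝ) (i : ℕ) : ℝ :=
  if i = 0 then 0 else if n ≤ i then 1 else (p i + p (i + 1)) / 2

/-- The length of the Voronoi cell of `p (i + 1)`, i.e. the probability that a uniform arrival is
matched to this point. -/
noncomputable def cellLength (n : ℕ) (i : ℕ) (p : ℕ → ℝ) : ℝ :=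
  bisector n p (i + 1) - bisector n p i

/-- The index `i` such that `p (i + 1)` is the free point closest to `y`, ties being broken to the
left. -/
noncomputable def nearestIdx (n : ℕ) (p : ℕ → ℝ) (y : ℝ) : ℕ :=
  #{i ∈ range (n - 1) | (p (i + 1) + p (i + 2)) / 2 < y}

namespace IsConfig

variable {n : ℕ} {p : ℕ → ℝ}

lemma monotone (h : IsConfig n p) : Monotone p := by
  refine monotone_nat_of_le_succ fun i => ?_
  by_cases hi : i ≤ n
  · exact (h.lt_succ i hi).le
  · rw [h.one i (by lia), h.one (i + 1) (by lia)]

lemma lt_of_lt (h : IsConfig n p) {i j : ℕ} (hi : i ≤ n) (hij : i < j) : p i < p j :=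
  (h.lt_succ i hi).trans_le (h.monotone hij)

lemma mem_Icc (h : IsConfig n p) : p ∈ Set.Icc (0 : ℕ → ℝ) 1 := by
  refine ⟨fun i => ?_, fun i => ?_⟩
  · exact h.zero.symm.trans_le (h.monotone i.zero_le)
  · exact (h.monotone (show i ≤ i + n + 1 by lia)).trans_eq (h.one _ (by lia))

lemma gap_nonneg (h : IsConfig n p) (i : ℕ) : 0 ≤ gap p i :=
  sub_nonneg.2 (h.monotone i.le_succ)

lemma gap_eq_zero (h : IsConfig n p) {i : ℕ} (hi : n < i) : gap p i = 0 := by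
  rw [gap, h.one i hi, h.one (i + 1) (by lia), sub_self]

lemma sum_gap (h : IsConfig n p) : ∑ i ∈ range (n + 1), gap p i = 1 := by
  simp only [gap]
  rw [sum_range_sub, h.zero, h.one (n + 1) n.lt_succ_self, sub_zero]

protected lemma mergeAt (h : IsConfig (n + 1) p) {i : ℕ} (hi : i ≤ n) :
    IsConfig n (mergeAt i p) where
  zero := by simp [mergeAt, h.zero]
  one j hj := by simp [mergeAt, show ¬ j ≤ i by lia, h.one (j + 1) (by lia)]
  lt_succ k hk := by
    simp only [mergeAt]
    split_ifs
    · exact h.lt_succ k (by lia)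
    · exact h.lt_of_lt (by lia) (by lia)
    · lia
    · exact h.lt_succ (k + 1) (by lia)

lemma pointSet_erase (h : IsConfig (n + 1) p) {i : ℕ} (hi : i ≤ n) :
    (pointSet (n + 1) p).erase (p (i + 1)) = pointSet n (mergeAt i p) := by
  ext x
  simp only [pointSet, mem_erase, mem_image, mem_range, mergeAt]
  constructor
  · rintro ⟨hx, k, hk, rfl⟩
    rcases lt_trichotomy k i with hlt | rfl | hgt
    · exact ⟨k, by lia, if_pos hlt⟩
    · exact absurd rfl hx
    · exact ⟨k - 1, by lia, by rw [if_neg (by lia), Nat.sub_add_cancel (by lia)]⟩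
  · rintro ⟨k, hk, rfl⟩
    split_ifs with hki
    · exact ⟨(h.lt_of_lt (by lia) (by lia)).ne, k, by lia, rfl⟩
    · exact ⟨(h.lt_of_lt (by lia) (by lia)).ne', k + 1, by lia, rfl⟩

lemma bisector_mono (h : IsConfig n p) : Monotone (bisector n p) := by
  refine monotone_nat_of_le_succ fun i => ?_
  have h₀ (j : ℕ) : 0 ≤ p j := h.mem_Icc.1 j
  have h₁ (j : ℕ) : p j ≤ 1 := h.mem_Icc.2 j
  have h₂ := h.monotone (show i ≤ i + 2 by lia)
  unfold bisector
  split_ifs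
  all_goals first | lia | linarith [h₀ i, h₁ i, h₀ (i + 1), h₁ (i + 1), h₀ (i + 2)]

lemma cellLength_nonneg (h : IsConfig n p) (i : ℕ) : 0 ≤ cellLength n i p :=
  sub_nonneg.2 (h.bisector_mono i.le_succ)

end IsConfig

section Cells

variable {n i : ℕ} {p : ℕ → ℝ}

lemma bisector_zero (n : ℕ) (p : ℕ → ℝ) : bisector n p 0 = 0 := if_pos rfl

lemma bisector_self (hn : n ≠ 0) (p : ℕ → ℝ) : bisector n p n = 1 := by
  rw [bisector, if_neg hn, if_pos le_rfl]

lemma bisector_of_lt (hi : i ≠ 0) (hin : i < n) (p : ℕ → ℝ) :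
    bisector n p i = (p i + p (i + 1)) / 2 := by
  rw [bisector, if_neg hi, if_neg hin.not_ge]

lemma sum_cellLength (hn : n ≠ 0) (p : ℕ → ℝ) : ∑ i ∈ range n, cellLength n i p = 1 := by
  simp only [cellLength]
  rw [sum_range_sub, bisector_self hn, bisector_zero, sub_zero]

lemma cellLength_congr {q : ℕ → ℝ} (h₀ : p i = q i) (h₁ : p (i + 1) = q (i + 1))
    (h₂ : p (i + 2) = q (i + 2)) : cellLength n i p = cellLength n i q := by
  simp only [cellLength, bisector, h₀, h₁, h₂]

lemma cellLength_of_interior (hi : i ≠ 0) (hin : i + 1 < n) (p : ℕ → ℝ) :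
    cellLength n i p = (gap p i + gap p (i + 1)) / 2 := by
  rw [cellLength, bisector_of_lt hi (by lia), bisector_of_lt (by lia) hin]
  simp only [gap]
  ring

lemma IsConfig.cellLength_eq (h : IsConfig n p) (hi : i < n) :
    cellLength n i p = (gap p i + gap p (i + 1)) / 2 + (if i = 0 then gap p 0 / 2 else 0)
      + (if i + 1 = n then gap p n / 2 else 0) := by
  have h₀ := h.zero
  have h₁ := h.one (n + 1) n.lt_succ_self
  unfold cellLength bisector gap
  split_ifs <;> first | lia | grind

lemma IsConfig.cellLength_le (h : IsConfig n p) (hi : i < n) :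
    cellLength n i p ≤ gap p i + gap p (i + 1) := by
  rw [h.cellLength_eq hi]
  have := h.gap_nonneg i
  have := h.gap_nonneg (i + 1)
  split_ifs <;> subst_vars <;> linarith

end Cells

/-! ### The greedy step -/

lemma lt_card_filter_lt_iff {b : ℕ → ℝ} (hb : Monotone b) {m i : ℕ} (hi : i < m) (y : ℝ) :
    i < #{j ∈ range m | b j < y} ↔ b i < y := by
  constructor
  · contrapose!
    intro hy
    refine (card_le_card fun j hj => ?_).trans_eq (card_range i)
    rw [mem_filter] at hj
    exact mem_range.2 (hb.reflect_lt (hj.2.trans_le hy))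
  · intro hy
    refine (card_range (i + 1)).symm.trans_le (card_le_card fun j hj => ?_)
    have hji := Nat.lt_succ_iff.1 (mem_range.1 hj)
    exact mem_filter.2 ⟨mem_range.2 (by lia), (hb hji).trans_lt hy⟩

lemma nearestIdx_lt {n : ℕ} (hn : n ≠ 0) (p : ℕ → ℝ) (y : ℝ) : nearestIdx n p y < n := by
  have := card_filter_le (range (n - 1)) fun i => (p (i + 1) + p (i + 2)) / 2 < y
  rw [card_range] at this
  exact this.trans_lt (by lia)

namespace IsConfig

variable {n : ℕ} {p : ℕ → ℝ}

lemma lt_nearestIdx_iff (h : IsConfig n p) {i : ℕ} (hi : i + 1 < n) (y : ℝ) :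
    i < nearestIdx n p y ↔ (p (i + 1) + p (i + 2)) / 2 < y := by
  refine lt_card_filter_lt_iff (b := fun j => (p (j + 1) + p (j + 2)) / 2) (fun j k hjk => ?_)
    (by lia) y
  have := h.monotone (Nat.succ_le_succ hjk)
  have := h.monotone (show j + 2 ≤ k + 2 by lia)
  dsimp only
  linarith

lemma nearestIdx_eq (h : IsConfig n p) {i : ℕ} (hi : i < n) {y : ℝ}
    (hy : y ∈ Set.Ioc (bisector n p i) (bisector n p (i + 1))) : nearestIdx n p y = i := by
  have hlt := nearestIdx_lt (show n ≠ 0 by lia) p y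
  refine le_antisymm (not_lt.1 fun hgt => ?_) (not_lt.1 fun hgt => ?_)
  · have hin : i + 1 < n := by lia
    rw [h.lt_nearestIdx_iff hin] at hgt
    rw [bisector_of_lt (i := i + 1) (by lia) (by lia)] at hy
    exact hgt.not_ge hy.2
  · obtain ⟨k, rfl⟩ := Nat.exists_eq_add_one_of_ne_zero (show i ≠ 0 by lia)
    rw [bisector_of_lt (i := k + 1) (by lia) hi] at hy
    exact hgt.not_ge ((h.lt_nearestIdx_iff hi y).2 hy.1)

lemma abs_sub_nearest_le (h : IsConfig n p) {i : ℕ} (hi : i < n) (y : ℝ) :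
    |p (nearestIdx n p y + 1) - y| ≤ |p (i + 1) - y| := by
  set m := nearestIdx n p y
  rcases lt_trichotomy i m with him | rfl | hmi
  · have hmn := nearestIdx_lt (show n ≠ 0 by lia) p y
    have hlt := (h.lt_nearestIdx_iff (i := m - 1) (by lia) y).1 (by lia)
    rw [show m - 1 + 1 = m by lia, show m - 1 + 2 = m + 1 by lia] at hlt
    have h₁ := h.monotone (show i + 1 ≤ m by lia)
    have h₂ := h.monotone m.le_succ
    refine (abs_le.2 ⟨?_, ?_⟩).trans (neg_le_abs _) <;> linarith
  · exact le_rfl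
  · have hle := not_lt.1 ((h.lt_nearestIdx_iff (i := m) (by lia) y).not.1 (by lia))
    have h₁ := h.monotone (show m + 2 ≤ i + 1 by lia)
    have h₂ := h.monotone (show m + 1 ≤ m + 2 by lia)
    refine (abs_le.2 ⟨?_, ?_⟩).trans (le_abs_self _) <;> linarith

lemma nearest_le_of_abs_sub_eq (h : IsConfig n p) {i : ℕ} (hi : i < n) {y : ℝ}
    (hy : |p (i + 1) - y| = |p (nearestIdx n p y + 1) - y|) :
    p (nearestIdx n p y + 1) ≤ p (i + 1) := by
  set m := nearestIdx n p y
  rcases le_or_gt m i with hmi | him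
  · exact h.monotone (by lia)
  · have hmn : m < n := nearestIdx_lt (show n ≠ 0 by lia) p y
    have hlt := (h.lt_nearestIdx_iff (i := m - 1) (by lia) y).1 (by lia)
    rw [show m - 1 + 1 = m by lia, show m - 1 + 2 = m + 1 by lia] at hlt
    have h₁ := h.monotone (show i + 1 ≤ m by lia)
    rcases abs_eq_abs.1 hy with h₂ | h₂ <;> linarith

end IsConfig

lemma closestStep_top_eq {S : Finset ℝ} {x y : ℝ} (hx : x ∈ S) (hmin : ∀ z ∈ S, |x - y| ≤ |z - y|)
    (htie : ∀ z ∈ S, |z - y| = |x - y| → x ≤ z) : closestStep ⊤ S y = (S.erase x, some x) := by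
  have hS : {z ∈ S | ENNReal.ofReal |z - y| < ⊤} = S :=
    filter_true_of_mem fun _ _ => ENNReal.ofReal_lt_top
  have hne : S.Nonempty := ⟨x, hx⟩
  have hinf : S.inf' hne (fun z => |z - y|) = |x - y| :=
    le_antisymm (inf'_le _ hx) (le_inf' _ _ hmin)
  have hleft (hh) : {z ∈ S | |z - y| = S.inf' hne fun z => |z - y|}.min' hh = x := by
    refine le_antisymm (min'_le _ _ (mem_filter.2 ⟨hx, hinf.symm⟩)) (le_min' _ _ _ fun z hz => ?_)
    rw [mem_filter, hinf] at hz
    exact htie z hz.1 hz.2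
  simp only [closestStep, hS, hne, dif_pos, hleft]

lemma IsConfig.closestStep_pointSet {n : ℕ} {p : ℕ → ℝ} (h : IsConfig (n + 1) p) (y : ℝ) :
    closestStep ⊤ (pointSet (n + 1) p) y =
      (pointSet n (mergeAt (nearestIdx (n + 1) p y) p),
        some (p (nearestIdx (n + 1) p y + 1))) := by
  have hlt := nearestIdx_lt n.succ_ne_zero p y
  rw [← h.pointSet_erase (Nat.lt_succ_iff.1 hlt)]
  refine closestStep_top_eq (mem_image_of_mem _ (mem_range.2 hlt)) ?_ ?_ <;>
    refine forall_mem_image.2 fun i hi => ?_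
  · exact h.abs_sub_nearest_le (mem_range.1 hi) y
  · exact h.nearest_le_of_abs_sub_eq (mem_range.1 hi)

/-- The configuration of free points left by the greedy algorithm (with threshold `∞`) after `k`
arrivals from the sequence `y`, starting from the configuration `p` of `n` points. -/
noncomputable def freePoints (n : ℕ) (p y : ℕ → ℝ) : ℕ → ℕ → ℝ
  | 0 => p
  | k + 1 => mergeAt (nearestIdx (n - k) (freePoints n p y k) (y k)) (freePoints n p y k)

/-- The distance from `y` to the closest point of a configuration of `n` points. -/
noncomputable def nearestDist (n : ℕ) (p : ℕ → ℝ) (y : ℝ) : ℝ := |p (nearestIdx n p y + 1) - y|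

section Trajectory

variable {n k : ℕ} {p : ℕ → ℝ}

protected lemma IsConfig.freePoints (h : IsConfig n p) (y : ℕ → ℝ) (hk : k ≤ n) :
    IsConfig (n - k) (freePoints n p y k) := by
  induction k with
  | zero => exact h
  | succ k ih =>
    have ih := ih (by lia)
    have hlt := nearestIdx_lt (show n - k ≠ 0 by lia) (freePoints n p y k) (y k)
    rw [freePoints]
    rw [show n - k = n - (k + 1) + 1 by lia] at ih hlt ⊢
    exact ih.mergeAt (Nat.lt_succ_iff.1 hlt)

lemma IsConfig.closestState_pointSet (h : IsConfig n p) (y : ℕ → ℝ) (hk : k ≤ n) :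
    closestState ⊤ (pointSet n p) y k = (pointSet (n - k) (freePoints n p y k), k,
      ∑ i ∈ range k, nearestDist (n - i) (freePoints n p y i) (y i)) := by
  induction k with
  | zero => rfl
  | succ k ih =>
    have hstep := h.freePoints y (show k ≤ n by lia)
    obtain ⟨m, hm⟩ := Nat.exists_eq_add_one_of_ne_zero (show n - k ≠ 0 by lia)
    rw [hm] at hstep
    rw [closestState, ih (by lia), sum_range_succ, freePoints,
      show n - (k + 1) = m by lia, hm, hstep.closestStep_pointSet (y k)]
    rfl

end Trajectory

/-! ### Laws of configurations -/

@[fun_prop]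
lemma continuous_gap (i : ℕ) : Continuous fun p : ℕ → ℝ => gap p i := by
  unfold gap
  fun_prop

@[fun_prop]
lemma continuous_mergeAt (i : ℕ) : Continuous (mergeAt i) := by
  refine continuous_pi fun k => ?_
  unfold mergeAt
  split_ifs <;> fun_prop

@[fun_prop]
lemma continuous_cellLength (n i : ℕ) : Continuous (cellLength n i) := by
  unfold cellLength bisector
  split_ifs <;> fun_prop

/-- Reflection of the point `p (i + 1)` between its two neighbours, which swaps the gaps `i` and
`i + 1`. -/
def reflectAt (i : ℕ) (p : ℕ → ℝ) : ℕ → ℝ :=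
  Function.update p (i + 1) (p i + p (i + 2) - p (i + 1))

lemma reflectAt_apply (i : ℕ) (p : ℕ → ℝ) (k : ℕ) :
    reflectAt i p k = if k = i + 1 then p i + p (i + 2) - p (i + 1) else p k := by
  rw [reflectAt, Function.update_apply]

@[fun_prop]
lemma continuous_reflectAt (i : ℕ) : Continuous (reflectAt i) := by
  refine continuous_pi fun k => ?_
  simp only [reflectAt_apply]
  split_ifs <;> fun_prop

lemma gap_reflectAt (i : ℕ) (p : ℕ → ℝ) : gap (reflectAt i p) = gap p ∘ Equiv.swap i (i + 1) := by
  funext k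
  rw [Function.comp_apply]
  rcases eq_or_ne k i with rfl | hki
  · simp only [Equiv.swap_apply_left, gap, reflectAt_apply]
    grind
  rcases eq_or_ne k (i + 1) with rfl | hki'
  · simp only [Equiv.swap_apply_right, gap, reflectAt_apply]
    grind
  · rw [Equiv.swap_apply_of_ne_of_ne hki hki']
    simp only [gap, reflectAt_apply]
    grind

/-- The gaps `lo, …, hi` of a random sequence are exchangeable. It is enough to ask this for the
swaps of two adjacent gaps, which are realized by reflections of points. -/
def GapExchangeable (lo hi : ℕ) (μ : Measure (ℕ → ℝ)) : Prop :=
  ∀ i, lo ≤ i → i < hi → MeasurePreserving (reflectAt i) μ μ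

/-- The law of the configuration after a uniform arrival has been matched to the closest point of a
configuration of `n` points with law `μ`. -/
noncomputable def nextLaw (n : ℕ) (μ : Measure (ℕ → ℝ)) : Measure (ℕ → ℝ) :=
  ∑ i ∈ range n, (μ.withDensity fun p => ENNReal.ofReal (cellLength n i p)).map (mergeAt i)

section Exchangeable

variable {lo hi n : ℕ} {μ : Measure (ℕ → ℝ)}

lemma GapExchangeable.mono {lo' hi' : ℕ} (h : GapExchangeable lo hi μ) (hlo : lo ≤ lo')
    (hhi : hi' ≤ hi) : GapExchangeable lo' hi' μ :=
  fun i h₁ h₂ => h i (hlo.trans h₁) (h₂.trans_le hhi)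

lemma GapExchangeable.exists_measurePreserving_swap (h : GapExchangeable lo hi μ) {a b : ℕ}
    (ha : a ∈ Icc lo hi) (hb : b ∈ Icc lo hi) :
    ∃ T : (ℕ → ℝ) → ℕ → ℝ, MeasurePreserving T μ μ ∧
      ∀ p, gap (T p) = gap p ∘ Equiv.swap a b := by
  wlog hab : a ≤ b generalizing a b
  · rw [Equiv.swap_comm]
    exact this hb ha (le_of_not_ge hab)
  rw [mem_Icc] at ha hb
  obtain ⟨-, hb⟩ := hb
  induction b, hab using Nat.le_induction with
  | base => exact ⟨id, .id μ, by simp⟩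
  | succ b hab ih =>
    obtain ⟨T, hT, hgap⟩ := ih (by lia)
    rcases hab.eq_or_lt with rfl | hlt
    · exact ⟨reflectAt a, h a ha.1 hb, gap_reflectAt a⟩
    have hR := h b (by lia) hb
    refine ⟨reflectAt b ∘ T ∘ reflectAt b, hR.comp (hT.comp hR), fun p => ?_⟩
    have hswap : Equiv.swap a (b + 1) =
        Equiv.swap b (b + 1) * Equiv.swap a b * Equiv.swap b (b + 1) := by
      rw [Equiv.swap_mul_swap_mul_swap (by lia) (by lia), Equiv.swap_comm]
    simp only [Function.comp_apply, gap_reflectAt, hgap, hswap]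
    rfl

lemma GapExchangeable.integral_gap_comp_swap (h : GapExchangeable lo hi μ) {b c : ℕ}
    (hb : b ∈ Icc lo hi) (hc : c ∈ Icc lo hi) {F : (ℕ → ℝ) → ℝ} (hF : Continuous F) :
    ∫ p, F (gap p ∘ Equiv.swap b c) ∂μ = ∫ p, F (gap p) ∂μ := by
  obtain ⟨T, hT, hgap⟩ := h.exists_measurePreserving_swap hb hc
  have hcont : Continuous fun p => F (gap p) := hF.comp (continuous_pi continuous_gap)
  conv_rhs => rw [← hT.map_eq]
  rw [integral_map hT.measurable.aemeasurable hcont.aestronglyMeasurable]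
  simp only [hgap]

lemma lintegral_nextLaw (n : ℕ) (μ : Measure (ℕ → ℝ)) {f : (ℕ → ℝ) → ℝ≥0∞} (hf : Measurable f) :
    ∫⁻ p, f p ∂nextLaw n μ =
      ∑ i ∈ range n, ∫⁻ p, ENNReal.ofReal (cellLength n i p) * f (mergeAt i p) ∂μ := by
  rw [nextLaw, lintegral_finsetSum_measure]
  refine sum_congr rfl fun i _ => ?_
  have hm := (continuous_mergeAt i).measurable
  have hc := (continuous_cellLength n i).measurable.ennreal_ofReal
  rw [lintegral_map hf hm]
  exact lintegral_withDensity_eq_lintegral_mul _ hc (hf.comp hm)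

-- Reflecting after the merge is the same as first permuting the gaps and then merging the pair of
-- gaps to which the merged pair has been moved.
lemma GapExchangeable.exists_reflectAt_mergeAt (h : GapExchangeable 1 n μ) {i : ℕ} (hi₁ : 1 ≤ i)
    (hin : i < n - 1) (j : ℕ) :
    ∃ T : (ℕ → ℝ) → ℕ → ℝ, MeasurePreserving T μ μ ∧ ∀ p,
      reflectAt i (mergeAt j p) = mergeAt (Equiv.swap i (i + 1) j) (T p) ∧
      cellLength (n + 1) j p = cellLength (n + 1) (Equiv.swap i (i + 1) j) (T p) := by
  have h₀ := h i hi₁ (by lia)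
  have h₁ := h (i + 1) (by lia) (by lia)
  rcases eq_or_ne j i with rfl | hji
  · refine ⟨_, h₀.comp h₁, fun p => ⟨?_, ?_⟩⟩ <;> rw [Equiv.swap_apply_left]
    · funext k
      simp only [reflectAt_apply, mergeAt, Function.comp_apply]
      grind
    · rw [cellLength_of_interior (by lia) (by lia), cellLength_of_interior (by lia) (by lia)]
      simp only [gap, reflectAt_apply, Function.comp_apply]
      grind
  rcases eq_or_ne j (i + 1) with rfl | hji'
  · refine ⟨_, h₁.comp h₀, fun p => ⟨?_, ?_⟩⟩ <;> rw [Equiv.swap_apply_right]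
    · funext k
      simp only [reflectAt_apply, mergeAt, Function.comp_apply]
      grind
    · rw [cellLength_of_interior (by lia) (by lia), cellLength_of_interior (by lia) (by lia)]
      simp only [gap, reflectAt_apply, Function.comp_apply]
      grind
  rw [Equiv.swap_apply_of_ne_of_ne hji hji']
  rcases lt_or_gt_of_ne hji with hlt | hgt
  · refine ⟨_, h₁, fun p => ⟨?_, cellLength_congr ?_ ?_ ?_⟩⟩
    · funext k
      simp only [reflectAt_apply, mergeAt]
      grind
    all_goals rw [reflectAt_apply, if_neg (by lia)]
  · refine ⟨_, h₀, fun p => ⟨?_, cellLength_congr ?_ ?_ ?_⟩⟩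
    · funext k
      simp only [reflectAt_apply, mergeAt]
      grind
    all_goals rw [reflectAt_apply, if_neg (by lia)]

lemma GapExchangeable.nextLaw (h : GapExchangeable 1 n μ) :
    GapExchangeable 1 (n - 1) (nextLaw (n + 1) μ) := by
  intro i hi₁ hin
  have hR := (continuous_reflectAt i).measurable
  refine ⟨hR, Measure.ext_of_lintegral _ fun f hf => ?_⟩
  rw [lintegral_map hf hR, lintegral_nextLaw _ _ hf]
  refine (lintegral_nextLaw _ _ (hf.comp hR)).trans
    (sum_equiv (Equiv.swap i (i + 1)) (fun j => ?_) fun j _ => ?_)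
  · simp only [mem_range, Equiv.swap_apply_def]
    split_ifs <;> lia
  · simp only [Function.comp_apply]
    obtain ⟨T, hT, hTj⟩ := h.exists_reflectAt_mergeAt hi₁ hin j
    have hm := (continuous_mergeAt (Equiv.swap i (i + 1) j)).measurable
    have hc := (continuous_cellLength (n + 1) (Equiv.swap i (i + 1) j)).measurable
    refine (lintegral_congr fun p => ?_).trans
      (hT.lintegral_comp (hc.ennreal_ofReal.mul (hf.comp hm)))
    rw [(hTj p).1, (hTj p).2]

end Exchangeable

lemma measurableSet_isConfig (n : ℕ) : MeasurableSet {p | IsConfig n p} := by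
  have : {p | IsConfig n p} =
      {p | p 0 = 0 ∧ (∀ j, n < j → p j = 1) ∧ ∀ i ≤ n, p i < p (i + 1)} :=
    Set.ext fun p => ⟨fun h => ⟨h.zero, h.one, h.lt_succ⟩, fun h => ⟨h.1, h.2.1, h.2.2⟩⟩
  rw [this]
  measurability

/-- `μ` is the law of a random configuration of `n` points whose interior gaps `1, …, n - 1` are
exchangeable. -/
structure IsConfigLaw (n : ℕ) (μ : Measure (ℕ → ℝ)) : Prop where
  isProbabilityMeasure : IsProbabilityMeasure μ
  ae_isConfig : ∀ᵐ p ∂μ, IsConfig n p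
  gapExchangeable : GapExchangeable 1 (n - 1) μ

namespace IsConfigLaw

variable {n : ℕ} {μ : Measure (ℕ → ℝ)} {f g : (ℕ → ℝ) → ℝ}

-- Configurations lie in the compact cube `[0, 1]^ℕ`.
lemma integrable (h : IsConfigLaw n μ) (hf : Continuous f) : Integrable f μ := by
  have := h.isProbabilityMeasure
  obtain ⟨C, hC⟩ := (isCompact_Icc (a := (0 : ℕ → ℝ)) (b := 1)).exists_bound_of_continuousOn
    hf.continuousOn
  exact .of_bound hf.aestronglyMeasurable C (h.ae_isConfig.mono fun p hp => hC p hp.mem_Icc)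

lemma integral_mono (h : IsConfigLaw n μ) (hf : Continuous f) (hg : Continuous g)
    (hfg : ∀ p, IsConfig n p → f p ≤ g p) : ∫ p, f p ∂μ ≤ ∫ p, g p ∂μ :=
  integral_mono_ae (h.integrable hf) (h.integrable hg) (h.ae_isConfig.mono hfg)

lemma integral_nonneg (h : IsConfigLaw n μ) (hf : ∀ p, IsConfig n p → 0 ≤ f p) :
    0 ≤ ∫ p, f p ∂μ :=
  integral_nonneg_of_ae (h.ae_isConfig.mono hf)

lemma integral_congr (h : IsConfigLaw n μ) (hf : ∀ p, IsConfig n p → f p = g p) :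
    ∫ p, f p ∂μ = ∫ p, g p ∂μ :=
  integral_congr_ae (h.ae_isConfig.mono hf)

protected lemma nextLaw (h : IsConfigLaw (n + 1) μ) : IsConfigLaw n (nextLaw (n + 1) μ) where
  isProbabilityMeasure := by
    have := h.isProbabilityMeasure
    have hc (i : ℕ) : Measurable (cellLength (n + 1) i) := (continuous_cellLength _ i).measurable
    rw [isProbabilityMeasure_iff, ← lintegral_one, lintegral_nextLaw _ _ measurable_const]
    simp only [mul_one]
    rw [← lintegral_finsetSum _ fun i _ => (hc i).ennreal_ofReal, ← measure_univ (μ := μ),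
      ← lintegral_one]
    refine lintegral_congr_ae (h.ae_isConfig.mono fun p hp => ?_)
    dsimp only
    rw [← ENNReal.ofReal_sum_of_nonneg fun i _ => hp.cellLength_nonneg i,
      sum_cellLength n.succ_ne_zero, ENNReal.ofReal_one]
  ae_isConfig := by
    rw [ae_iff, nextLaw, Measure.finsetSum_apply]
    refine sum_eq_zero fun i hi => ?_
    rw [← ae_iff, ae_map_iff (by fun_prop) (measurableSet_isConfig n)]
    refine (withDensity_absolutelyContinuous μ _).ae_le (h.ae_isConfig.mono fun p hp => ?_)
    exact hp.mergeAt (Nat.lt_succ_iff.1 (mem_range.1 hi))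
  gapExchangeable := h.gapExchangeable.nextLaw

lemma integral_nextLaw (h : IsConfigLaw (n + 1) μ) (hf : Continuous f) :
    ∫ p, f p ∂nextLaw (n + 1) μ =
      ∫ p, ∑ i ∈ range (n + 1), cellLength (n + 1) i p * f (mergeAt i p) ∂μ := by
  have hi (i : ℕ) : ∫ p, f p ∂(μ.withDensity fun p =>
      ENNReal.ofReal (cellLength (n + 1) i p)).map (mergeAt i) =
      ∫ p, cellLength (n + 1) i p * f (mergeAt i p) ∂μ := by
    rw [integral_map (by fun_prop) hf.aestronglyMeasurable,
      integral_withDensity_eq_integral_toReal_smul (by fun_prop) (by simp)]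
    exact h.integral_congr fun p hp => by
      rw [ENNReal.toReal_ofReal (hp.cellLength_nonneg i), smul_eq_mul]
  rw [integral_finsetSum _ fun i _ => h.integrable (by fun_prop)]
  simp only [← hi]
  refine integral_finsetSum_measure fun i hin => ?_
  exact integrable_finsetSum_measure.1 (h.nextLaw.integrable hf) i hin

end IsConfigLaw

/-! ### Power sums of the gaps -/

/-- The sum of the `q`-th powers of the gaps of a configuration of `n` points. -/
def gapPowerSum (q n : ℕ) (p : ℕ → ℝ) : ℝ := ∑ i ∈ range (n + 1), gap p i ^ q

/-- The largest gap of a configuration of `n` points. -/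
noncomputable def maxGap (n : ℕ) (p : ℕ → ℝ) : ℝ :=
  (range (n + 1)).sup' nonempty_range_add_one (gap p)

@[fun_prop]
lemma continuous_gapPowerSum (q n : ℕ) : Continuous (gapPowerSum q n) := by
  unfold gapPowerSum
  fun_prop

@[fun_prop]
lemma continuous_maxGap (n : ℕ) : Continuous (maxGap n) :=
  Continuous.finset_sup'_apply _ fun i _ => continuous_gap i

lemma gap_mergeAt (i : ℕ) (p : ℕ → ℝ) (j : ℕ) : gap (mergeAt i p) j =
    if j < i then gap p j else if j = i then gap p i + gap p (i + 1) else gap p (j + 1) := by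
  simp only [gap, mergeAt]
  grind

lemma gapPowerSum_mergeAt {n i : ℕ} (hi : i ≤ n) (q : ℕ) (p : ℕ → ℝ) :
    gapPowerSum q n (mergeAt i p) = gapPowerSum q (n + 1) p +
      ((gap p i + gap p (i + 1)) ^ q - gap p i ^ q - gap p (i + 1) ^ q) := by
  obtain ⟨d, rfl⟩ := Nat.exists_eq_add_of_le hi
  have h₁ : ∑ j ∈ range i, gap (mergeAt i p) j ^ q = ∑ j ∈ range i, gap p j ^ q :=
    sum_congr rfl fun j hj => by rw [gap_mergeAt, if_pos (mem_range.1 hj)]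
  have h₂ : ∑ j ∈ range d, gap (mergeAt i p) (i + (j + 1)) ^ q =
      ∑ j ∈ range d, gap p (i + (j + 1 + 1)) ^ q :=
    sum_congr rfl fun j _ => by rw [gap_mergeAt, if_neg (by lia), if_neg (by lia)]; rfl
  have h₃ : gap (mergeAt i p) i = gap p i + gap p (i + 1) := by simp [gap_mergeAt]
  have h₄ : gapPowerSum q (i + d) (mergeAt i p) = ∑ j ∈ range i, gap p j ^ q +
      (∑ j ∈ range d, gap p (i + (j + 1 + 1)) ^ q + (gap p i + gap p (i + 1)) ^ q) := by
    rw [gapPowerSum, add_assoc, sum_range_add, sum_range_succ', h₁, h₂, add_zero, h₃]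
  have h₅ : gapPowerSum q (i + d + 1) p = ∑ j ∈ range i, gap p j ^ q +
      (∑ j ∈ range d, gap p (i + (j + 1 + 1)) ^ q + gap p (i + 1) ^ q + gap p i ^ q) := by
    rw [gapPowerSum, add_assoc, add_assoc, sum_range_add, ← add_assoc, sum_range_succ',
      sum_range_succ', zero_add, add_zero]
  rw [h₄, h₅]
  ring

namespace IsConfig

variable {n : ℕ} {p : ℕ → ℝ}

lemma gapPowerSum_nonneg (h : IsConfig n p) (q : ℕ) : 0 ≤ gapPowerSum q n p :=
  sum_nonneg fun i _ => pow_nonneg (h.gap_nonneg i) q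

lemma gap_le_maxGap (h : IsConfig n p) (i : ℕ) : gap p i ≤ maxGap n p := by
  rcases le_or_gt i n with hi | hi
  · exact le_sup' (gap p) (mem_range_succ_iff.2 hi)
  · rw [h.gap_eq_zero hi]
    exact (h.gap_nonneg 0).trans (le_sup' (gap p) (mem_range_succ_iff.2 n.zero_le))

lemma maxGap_nonneg (h : IsConfig n p) : 0 ≤ maxGap n p :=
  (h.gap_nonneg 0).trans (h.gap_le_maxGap 0)

lemma gap_le_one (h : IsConfig n p) (i : ℕ) : gap p i ≤ 1 :=
  sub_le_iff_le_add.2 ((h.mem_Icc.2 (i + 1)).trans (le_add_of_nonneg_right (h.mem_Icc.1 i)))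

lemma maxGap_pow_le (h : IsConfig n p) (q : ℕ) : maxGap n p ^ q ≤ gapPowerSum q n p := by
  obtain ⟨i, hi, hmax⟩ := exists_mem_eq_sup' (nonempty_range_add_one (n := n)) (gap p)
  rw [maxGap, hmax]
  exact single_le_sum (f := fun i => gap p i ^ q) (fun j _ => pow_nonneg (h.gap_nonneg j) q) hi

lemma gapPowerSum_two_le (h : IsConfig n p) : gapPowerSum 2 n p ≤ maxGap n p := by
  calc gapPowerSum 2 n p ≤ ∑ i ∈ range (n + 1), maxGap n p * gap p i := by
        refine sum_le_sum fun i _ => ?_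
        rw [sq]
        exact mul_le_mul_of_nonneg_right (h.gap_le_maxGap i) (h.gap_nonneg i)
    _ = maxGap n p := by rw [← mul_sum, h.sum_gap, mul_one]

end IsConfig

/-! ### Pairs of gaps under exchangeability -/

/-- The sum of `x ^ q * y` over the gaps `x` having an interior gap `y` as right neighbour, for a
configuration of `n + 1` points. -/
def rightPairSum (q n : ℕ) (p : ℕ → ℝ) : ℝ := ∑ i ∈ range n, gap p i ^ q * gap p (i + 1)

/-- The sum of `x ^ q * y` over the gaps `x` having an interior gap `y` as left neighbour, for a
configuration of `n + 1` points. -/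
def leftPairSum (q n : ℕ) (p : ℕ → ℝ) : ℝ := ∑ i ∈ range n, gap p (i + 2) ^ q * gap p (i + 1)

@[fun_prop]
lemma continuous_rightPairSum (q n : ℕ) : Continuous (rightPairSum q n) := by
  unfold rightPairSum
  fun_prop

@[fun_prop]
lemma continuous_leftPairSum (q n : ℕ) : Continuous (leftPairSum q n) := by
  unfold leftPairSum
  fun_prop

namespace IsConfigLaw

variable {n a b c : ℕ} {μ : Measure (ℕ → ℝ)}

lemma integral_gap_pow_mul_gap (h : IsConfigLaw (n + 1) μ) (hb : b ∈ (Icc 1 n).erase a)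
    (q r w : ℕ) :
    #((Icc 1 n).erase a) * ∫ p, gap p a ^ q * gapPowerSum r (n + 1) p ^ w * gap p b ∂μ =
      ∫ p, gap p a ^ q * gapPowerSum r (n + 1) p ^ w * ∑ c ∈ (Icc 1 n).erase a, gap p c ∂μ := by
  have hbc (c : ℕ) (hc : c ∈ (Icc 1 n).erase a) :
      ∫ p, gap p a ^ q * gapPowerSum r (n + 1) p ^ w * gap p c ∂μ =
        ∫ p, gap p a ^ q * gapPowerSum r (n + 1) p ^ w * gap p b ∂μ := by
    rw [mem_erase] at hb hc
    refine Eq.trans ?_ (h.gapExchangeable.integral_gap_comp_swap hb.2 hc.2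
      (F := fun g => g a ^ q * (∑ i ∈ range (n + 1 + 1), g i ^ r) ^ w * g b) (by fun_prop))
    refine integral_congr_ae (.of_forall fun p => ?_)
    have hsum : ∑ i ∈ range (n + 1 + 1), gap p (Equiv.swap b c i) ^ r = gapPowerSum r (n + 1) p :=
      Equiv.Perm.sum_comp _ _ (fun i => gap p i ^ r) fun i hi => by
        simp only [Set.mem_ofPred_eq, Equiv.swap_apply_def] at hi
        grind
    simp only [Function.comp_apply, hsum, Equiv.swap_apply_left,
      Equiv.swap_apply_of_ne_of_ne hb.1.symm hc.1.symm]
  simp only [mul_sum]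
  rw [integral_finsetSum _ fun c _ => h.integrable (by fun_prop), sum_congr rfl hbc, sum_const,
    nsmul_eq_mul]

lemma integral_gap_pow_mul_gap_le (h : IsConfigLaw (n + 1) μ) (hb : b ∈ Icc 1 n) (hab : a ≠ b)
    (q r w : ℕ) :
    (n - 1) * ∫ p, gap p a ^ q * gapPowerSum r (n + 1) p ^ w * gap p b ∂μ ≤
      ∫ p, gap p a ^ q * gapPowerSum r (n + 1) p ^ w ∂μ := by
  have hcard : (n : ℝ) - 1 ≤ #((Icc 1 n).erase a) := by
    have := pred_card_le_card_erase (s := Icc 1 n) (a := a)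
    rw [Nat.card_Icc] at this
    rw [sub_le_iff_le_add]
    exact_mod_cast (by lia : n ≤ #((Icc 1 n).erase a) + 1)
  have hF (p : ℕ → ℝ) (hp : IsConfig (n + 1) p) :
      0 ≤ gap p a ^ q * gapPowerSum r (n + 1) p ^ w :=
    mul_nonneg (pow_nonneg (hp.gap_nonneg a) q) (pow_nonneg (hp.gapPowerSum_nonneg r) w)
  refine (mul_le_mul_of_nonneg_right hcard
    (h.integral_nonneg fun p hp => mul_nonneg (hF p hp) (hp.gap_nonneg b))).trans ?_
  rw [h.integral_gap_pow_mul_gap (mem_erase.2 ⟨hab.symm, hb⟩)]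
  refine h.integral_mono (by fun_prop) (by fun_prop) fun p hp => ?_
  refine mul_le_of_le_one_right (hF p hp) (le_of_le_of_eq ?_ hp.sum_gap)
  refine sum_le_sum_of_subset_of_nonneg (fun i hi => ?_) fun i _ _ => hp.gap_nonneg i
  rw [mem_erase, mem_Icc] at hi
  exact mem_range.2 (by lia)

lemma integral_gap_pow_le (h : IsConfigLaw (n + 1) μ) (hb : b ∈ Icc 1 n) (q : ℕ) :
    n * ∫ p, gap p b ^ q ∂μ ≤ ∫ p, gapPowerSum q (n + 1) p ∂μ := by
  have hbc (c : ℕ) (hc : c ∈ Icc 1 n) : ∫ p, gap p c ^ q ∂μ = ∫ p, gap p b ^ q ∂μ := by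
    rw [← h.gapExchangeable.integral_gap_comp_swap hb hc (F := fun g => g b ^ q) (by fun_prop)]
    simp only [Function.comp_apply, Equiv.swap_apply_left]
  calc n * ∫ p, gap p b ^ q ∂μ = ∫ p, ∑ c ∈ Icc 1 n, gap p c ^ q ∂μ := by
        rw [integral_finsetSum _ fun c _ => h.integrable (by fun_prop), sum_congr rfl hbc,
          sum_const, nsmul_eq_mul, Nat.card_Icc, Nat.add_sub_cancel]
    _ ≤ ∫ p, gapPowerSum q (n + 1) p ∂μ := by
        refine h.integral_mono (by fun_prop) (by fun_prop) fun p hp => ?_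
        refine sum_le_sum_of_subset_of_nonneg (fun i hi => ?_)
          fun i _ _ => pow_nonneg (hp.gap_nonneg i) q
        rw [mem_Icc] at hi
        exact mem_range.2 (by lia)

lemma integral_rightPairSum_le (h : IsConfigLaw (n + 1) μ) (q w : ℕ) :
    (n - 1) * ∫ p, rightPairSum q n p * gapPowerSum q (n + 1) p ^ w ∂μ ≤
      ∫ p, gapPowerSum q (n + 1) p ^ (w + 1) ∂μ := by
  simp only [rightPairSum, sum_mul]
  rw [integral_finsetSum _ fun i _ => h.integrable (by fun_prop), mul_sum]
  calc _ ≤ ∑ i ∈ range n, ∫ p, gap p i ^ q * gapPowerSum q (n + 1) p ^ w ∂μ := by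
        refine sum_le_sum fun i hi => ?_
        simp only [mul_right_comm _ (gap _ (i + 1))]
        exact h.integral_gap_pow_mul_gap_le (mem_Icc.2 ⟨by lia, mem_range.1 hi⟩) (by lia) q q w
    _ ≤ _ := by
        rw [← integral_finsetSum _ fun i _ => h.integrable (by fun_prop)]
        refine h.integral_mono (by fun_prop) (by fun_prop) fun p hp => ?_
        rw [← sum_mul, pow_succ']
        refine mul_le_mul_of_nonneg_right ?_ (pow_nonneg (hp.gapPowerSum_nonneg q) w)
        exact sum_le_sum_of_subset_of_nonneg (range_mono (by lia))
          fun i _ _ => pow_nonneg (hp.gap_nonneg i) q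

lemma integral_leftPairSum_le (h : IsConfigLaw (n + 1) μ) (q w : ℕ) :
    (n - 1) * ∫ p, leftPairSum q n p * gapPowerSum q (n + 1) p ^ w ∂μ ≤
      ∫ p, gapPowerSum q (n + 1) p ^ (w + 1) ∂μ := by
  simp only [leftPairSum, sum_mul]
  rw [integral_finsetSum _ fun i _ => h.integrable (by fun_prop), mul_sum]
  calc _ ≤ ∑ i ∈ range n, ∫ p, gap p (i + 2) ^ q * gapPowerSum q (n + 1) p ^ w ∂μ := by
        refine sum_le_sum fun i hi => ?_
        simp only [mul_right_comm _ (gap _ (i + 1))]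
        exact h.integral_gap_pow_mul_gap_le (mem_Icc.2 ⟨by lia, mem_range.1 hi⟩) (by lia) q q w
    _ ≤ _ := by
        rw [← integral_finsetSum _ fun i _ => h.integrable (by fun_prop)]
        refine h.integral_mono (by fun_prop) (by fun_prop) fun p hp => ?_
        rw [← sum_mul, pow_succ']
        refine mul_le_mul_of_nonneg_right ?_ (pow_nonneg (hp.gapPowerSum_nonneg q) w)
        rw [gapPowerSum, sum_range_succ' _ (n + 1), sum_range_succ' _ n, add_assoc]
        refine le_add_of_nonneg_right (add_nonneg ?_ ?_) <;> exact pow_nonneg (hp.gap_nonneg _) q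

lemma sub_le_integral_gap_sq_mul_gap (h : IsConfigLaw (n + 1) μ) (ha : a ∈ Icc 1 n)
    (hb : b ∈ Icc 1 n) (hab : a ≠ b) :
    ∫ p, gap p a ^ 2 * (1 - 3 * maxGap (n + 1) p) ∂μ ≤
      (n - 1) * ∫ p, gap p a ^ 2 * gap p b ∂μ := by
  have hn : 1 ≤ n := (mem_Icc.1 ha).1.trans (mem_Icc.1 ha).2
  have heq := h.integral_gap_pow_mul_gap (mem_erase.2 ⟨hab.symm, hb⟩) 2 0 0
  simp only [card_erase_of_mem ha, Nat.card_Icc, Nat.add_sub_cancel, pow_zero, mul_one,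
    Nat.cast_sub hn, Nat.cast_one] at heq
  rw [heq]
  refine h.integral_mono (by fun_prop) (by fun_prop) fun p hp => ?_
  refine mul_le_mul_of_nonneg_left ?_ (sq_nonneg _)
  have hsum := hp.sum_gap
  have hIcc : ∑ i ∈ range n, gap p (i + 1) = ∑ i ∈ Icc 1 n, gap p i := by
    rw [← Ico_add_one_right_eq_Icc, range_eq_Ico, sum_Ico_add' (gap p) 0 n 1, zero_add]
  rw [sum_range_succ, sum_range_succ', hIcc, ← add_sum_erase _ _ ha] at hsum
  linarith [hp.gap_le_maxGap 0, hp.gap_le_maxGap a, hp.gap_le_maxGap (n + 1)]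

end IsConfigLaw

/-! ### Drift of the power sums -/

lemma add_pow_succ_le {x y : ℝ} (hx : 0 ≤ x) (hy : 0 ≤ y) (q : ℕ) :
    (x + y) ^ (q + 1) ≤ (x + y) * y ^ q + q * x * (x + y) ^ q := by
  induction q with
  | zero => simp
  | succ q ih =>
    calc (x + y) ^ (q + 1 + 1) = (x + y) ^ (q + 1) * (x + y) := pow_succ _ _
      _ ≤ ((x + y) * y ^ q + q * x * (x + y) ^ q) * (x + y) := by gcongr
      _ ≤ (x + y) * y ^ (q + 1) + ↑(q + 1) * x * (x + y) ^ (q + 1) := by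
        push_cast
        have hxy : (x + y) * y ^ q ≤ (x + y) ^ (q + 1) := by
          rw [pow_succ']
          gcongr
          linarith
        linear_combination x * hxy

lemma add_mul_add_pow_sub_le {x y : ℝ} (hx : 0 ≤ x) (hy : 0 ≤ y) (q : ℕ) :
    (x + y) * ((x + y) ^ q - x ^ q - y ^ q) ≤ q * 2 ^ q * (x ^ q * y + y ^ q * x) := by
  wlog hxy : x ≤ y generalizing x y
  · have := this hy hx (le_of_not_ge hxy)
    rw [add_comm x y]
    linarith
  calc (x + y) * ((x + y) ^ q - x ^ q - y ^ q)
    _ ≤ (x + y) ^ (q + 1) - (x + y) * y ^ q := by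
        rw [pow_succ']
        have : 0 ≤ (x + y) * x ^ q := by positivity
        linarith
    _ ≤ q * x * (x + y) ^ q := sub_le_iff_le_add'.2 (add_pow_succ_le hx hy q)
    _ ≤ q * x * (2 * y) ^ q := by gcongr; linarith
    _ ≤ q * 2 ^ q * (x ^ q * y + y ^ q * x) := by
        rw [mul_pow]
        have : 0 ≤ q * 2 ^ q * (x ^ q * y) := by positivity
        linarith

lemma sum_gap_pow_mul_gap_succ (q n : ℕ) (p : ℕ → ℝ) :
    ∑ i ∈ range (n + 1), gap p i ^ q * gap p (i + 1) =
      rightPairSum q n p + gap p n ^ q * gap p (n + 1) :=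
  sum_range_succ _ n

lemma sum_gap_succ_pow_mul_gap (q n : ℕ) (p : ℕ → ℝ) :
    ∑ i ∈ range (n + 1), gap p (i + 1) ^ q * gap p i =
      leftPairSum q n p + gap p 1 ^ q * gap p 0 :=
  sum_range_succ' _ n

lemma IsConfig.sum_cellLength_mul_gapPowerSum_le {n : ℕ} {p : ℕ → ℝ} (h : IsConfig (n + 1) p)
    {q : ℕ} (hq : q ≠ 0) :
    ∑ i ∈ range (n + 1), cellLength (n + 1) i p * gapPowerSum q n (mergeAt i p) ≤
      gapPowerSum q (n + 1) p + q * 2 ^ q * (rightPairSum q n p + gap p n ^ q +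
        (leftPairSum q n p + gap p 1 ^ q)) := by
  have hmerge (i : ℕ) (hi : i ∈ range (n + 1)) :
      cellLength (n + 1) i p * gapPowerSum q n (mergeAt i p) ≤
        cellLength (n + 1) i p * gapPowerSum q (n + 1) p +
          q * 2 ^ q * (gap p i ^ q * gap p (i + 1) + gap p (i + 1) ^ q * gap p i) := by
    rw [gapPowerSum_mergeAt (mem_range_succ_iff.1 hi), mul_add]
    refine add_le_add_right ?_ _
    refine le_trans ?_ (add_mul_add_pow_sub_le (h.gap_nonneg i) (h.gap_nonneg (i + 1)) q)
    refine mul_le_mul_of_nonneg_right (h.cellLength_le (mem_range.1 hi)) ?_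
    have := pow_add_pow_le (h.gap_nonneg i) (h.gap_nonneg (i + 1)) hq
    linarith
  refine (sum_le_sum hmerge).trans ?_
  rw [sum_add_distrib, ← sum_mul, sum_cellLength n.succ_ne_zero, one_mul, ← mul_sum,
    sum_add_distrib, sum_gap_pow_mul_gap_succ, sum_gap_succ_pow_mul_gap]
  have hle (a b : ℕ) : gap p a ^ q * gap p b ≤ gap p a ^ q :=
    mul_le_of_le_one_right (pow_nonneg (h.gap_nonneg a) q) (h.gap_le_one b)
  gcongr <;> exact hle _ _

lemma IsConfigLaw.integral_gapPowerSum_nextLaw_le {n : ℕ} {μ : Measure (ℕ → ℝ)}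
    (h : IsConfigLaw (n + 2) μ) {q : ℕ} (hq : q ≠ 0) :
    n * ∫ p, gapPowerSum q (n + 1) p ∂nextLaw (n + 2) μ ≤
      (n + 4 * q * 2 ^ q) * ∫ p, gapPowerSum q (n + 2) p ∂μ := by
  have hR := h.integral_rightPairSum_le q 0
  have hL := h.integral_leftPairSum_le q 0
  have hend (b : ℕ) (hb : b ∈ Icc 1 (n + 1)) :
      n * ∫ p, gap p b ^ q ∂μ ≤ ∫ p, gapPowerSum q (n + 2) p ∂μ := by
    refine le_trans ?_ (h.integral_gap_pow_le hb q)
    gcongr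
    · exact h.integral_nonneg fun p hp => pow_nonneg (hp.gap_nonneg b) q
    · lia
  simp only [pow_zero, mul_one, zero_add, pow_one, Nat.cast_add, Nat.cast_one,
    add_sub_cancel_right] at hR hL
  rw [h.integral_nextLaw (by fun_prop)]
  have hstep := h.integral_mono (by fun_prop) (by fun_prop)
    fun p hp => hp.sum_cellLength_mul_gapPowerSum_le hq
  rw [integral_add (h.integrable (by fun_prop)) (h.integrable (by fun_prop)), integral_const_mul,
    integral_add (h.integrable (by fun_prop)) (h.integrable (by fun_prop)),
    integral_add (h.integrable (by fun_prop)) (h.integrable (by fun_prop)),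
    integral_add (h.integrable (by fun_prop)) (h.integrable (by fun_prop))] at hstep
  have h₁ := hend 1 (mem_Icc.2 ⟨le_rfl, by lia⟩)
  have h₂ := hend (n + 1) (mem_Icc.2 ⟨by lia, le_rfl⟩)
  linear_combination (n : ℝ) * hstep + q * 2 ^ q * (hR + hL + h₁ + h₂)

lemma sum_cellLength_mul_gapPowerSum_two (n : ℕ) (p : ℕ → ℝ) :
    ∑ i ∈ range (n + 1), cellLength (n + 1) i p * gapPowerSum 2 n (mergeAt i p) =
      gapPowerSum 2 (n + 1) p +
        ∑ i ∈ range (n + 1), cellLength (n + 1) i p * (2 * gap p i * gap p (i + 1)) := by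
  have hmerge (i : ℕ) (hi : i ∈ range (n + 1)) :
      cellLength (n + 1) i p * gapPowerSum 2 n (mergeAt i p) =
        cellLength (n + 1) i p * gapPowerSum 2 (n + 1) p +
          cellLength (n + 1) i p * (2 * gap p i * gap p (i + 1)) := by
    rw [gapPowerSum_mergeAt (mem_range_succ_iff.1 hi)]
    ring
  rw [sum_congr rfl hmerge, sum_add_distrib, ← sum_mul, sum_cellLength n.succ_ne_zero, one_mul]

namespace IsConfig

variable {n : ℕ} {p : ℕ → ℝ}

lemma sum_cellLength_mul_two_mul_gap_mul_gap (h : IsConfig (n + 1) p) :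
    ∑ i ∈ range (n + 1), cellLength (n + 1) i p * (2 * gap p i * gap p (i + 1)) =
      rightPairSum 2 n p + leftPairSum 2 n p + (gap p n ^ 2 * gap p (n + 1) +
        gap p 1 ^ 2 * gap p 0 + gap p 0 ^ 2 * gap p 1 + gap p n * gap p (n + 1) ^ 2) := by
  have hcell (i : ℕ) (hi : i ∈ range (n + 1)) :
      cellLength (n + 1) i p * (2 * gap p i * gap p (i + 1)) =
        gap p i ^ 2 * gap p (i + 1) + gap p (i + 1) ^ 2 * gap p i +
          ((if i = 0 then gap p 0 ^ 2 * gap p 1 else 0) +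
            if i = n then gap p n * gap p (n + 1) ^ 2 else 0) := by
    rw [h.cellLength_eq (mem_range.1 hi)]
    grind
  rw [sum_congr rfl hcell, sum_add_distrib, sum_add_distrib, sum_add_distrib, sum_ite_eq',
    sum_ite_eq', if_pos (by simp), if_pos (by simp), sum_gap_pow_mul_gap_succ,
    sum_gap_succ_pow_mul_gap]
  ring

lemma gap_pow_mul_gap_pow_le (h : IsConfig n p) (a b i j : ℕ) :
    gap p a ^ i * gap p b ^ j ≤ maxGap n p ^ (i + j) := by
  rw [pow_add]
  gcongr
  exacts [pow_nonneg (h.gap_nonneg b) j, pow_nonneg h.maxGap_nonneg i, h.gap_nonneg a,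
    h.gap_le_maxGap a, h.gap_nonneg b, h.gap_le_maxGap b]

lemma gap_pow_le (h : IsConfig n p) (i q : ℕ) : gap p i ^ q ≤ maxGap n p ^ q :=
  pow_le_pow_left₀ (h.gap_nonneg i) (h.gap_le_maxGap i) q

lemma le_sum_cellLength_mul_gapPowerSum_two (h : IsConfig (n + 1) p) :
    gapPowerSum 2 (n + 1) p + (rightPairSum 2 n p + leftPairSum 2 n p) ≤
      ∑ i ∈ range (n + 1), cellLength (n + 1) i p * gapPowerSum 2 n (mergeAt i p) := by
  rw [sum_cellLength_mul_gapPowerSum_two, h.sum_cellLength_mul_two_mul_gap_mul_gap]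
  have hpos (a b i j : ℕ) : 0 ≤ gap p a ^ i * gap p b ^ j :=
    mul_nonneg (pow_nonneg (h.gap_nonneg a) i) (pow_nonneg (h.gap_nonneg b) j)
  linarith [hpos n (n + 1) 2 1, hpos 1 0 2 1, hpos 0 1 2 1, hpos n (n + 1) 1 2]

lemma sum_cellLength_mul_gapPowerSum_two_sq_le (h : IsConfig (n + 1) p) :
    ∑ i ∈ range (n + 1), cellLength (n + 1) i p * gapPowerSum 2 n (mergeAt i p) ^ 2 ≤
      gapPowerSum 2 (n + 1) p ^ 2 +
        2 * (rightPairSum 2 n p * gapPowerSum 2 (n + 1) p +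
          leftPairSum 2 n p * gapPowerSum 2 (n + 1) p) + 12 * maxGap (n + 1) p ^ 4 := by
  set A := gapPowerSum 2 (n + 1) p
  set M := maxGap (n + 1) p
  set D := ∑ i ∈ range (n + 1), cellLength (n + 1) i p * (2 * gap p i * gap p (i + 1))
  have hM : 0 ≤ M := h.maxGap_nonneg
  have hA : 0 ≤ A := h.gapPowerSum_nonneg 2
  have hmerge (i : ℕ) (hi : i ∈ range (n + 1)) :
      cellLength (n + 1) i p * gapPowerSum 2 n (mergeAt i p) ^ 2 ≤
        cellLength (n + 1) i p * (A ^ 2 + 4 * M ^ 4) +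
          2 * A * (cellLength (n + 1) i p * (2 * gap p i * gap p (i + 1))) := by
    rw [gapPowerSum_mergeAt (mem_range_succ_iff.1 hi)]
    have := mul_le_mul_of_nonneg_left (h.gap_pow_mul_gap_pow_le i (i + 1) 2 2)
      (h.cellLength_nonneg i)
    linear_combination 4 * this
  have hD : D ≤ rightPairSum 2 n p + leftPairSum 2 n p + 4 * M ^ 3 := by
    refine h.sum_cellLength_mul_two_mul_gap_mul_gap.trans_le ?_
    have hle (a b : ℕ) : gap p a ^ 2 * gap p b ≤ M ^ 3 := by
      simpa only [pow_one] using h.gap_pow_mul_gap_pow_le a b 2 1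
    linarith [hle n (n + 1), hle 1 0, hle 0 1, hle (n + 1) n]
  calc _ ≤ A ^ 2 + 4 * M ^ 4 + 2 * A * D := by
        refine (sum_le_sum hmerge).trans_eq ?_
        rw [sum_add_distrib, ← sum_mul, sum_cellLength n.succ_ne_zero, one_mul, ← mul_sum]
    _ ≤ A ^ 2 + 4 * M ^ 4 + 2 * A * (rightPairSum 2 n p + leftPairSum 2 n p + 4 * M ^ 3) := by
        gcongr
    _ ≤ _ := by
        have := mul_le_mul_of_nonneg_right h.gapPowerSum_two_le (pow_nonneg hM 3)
        linear_combination 8 * this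

lemma gapPowerSum_two_sub_le (h : IsConfig n p) {s : Finset ℕ} (hs : s ⊆ range (n + 1)) :
    gapPowerSum 2 n p - (n + 1 - #s) * maxGap n p ^ 2 ≤ ∑ i ∈ s, gap p i ^ 2 := by
  have hcompl := sum_le_card_nsmul (range (n + 1) \ s) (fun i => gap p i ^ 2) _
    fun i _ => h.gap_pow_le i 2
  have hcard := card_le_card hs
  rw [card_range] at hcard
  rw [card_sdiff_of_subset hs, card_range, nsmul_eq_mul, Nat.cast_sub hcard] at hcompl
  push_cast at hcompl
  rw [gapPowerSum, ← sum_sdiff hs]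
  linarith

end IsConfig

namespace IsConfigLaw

variable {n : ℕ} {μ : Measure (ℕ → ℝ)}

lemma sub_le_integral_sum_gap_sq_mul_gap (h : IsConfigLaw (n + 2) μ) {a b : ℕ → ℕ}
    (ha : Set.InjOn a (range n)) (ha_mem : ∀ i < n, a i ∈ Icc 1 (n + 1))
    (hb_mem : ∀ i < n, b i ∈ Icc 1 (n + 1)) (hab : ∀ i < n, a i ≠ b i) :
    ∫ p, gapPowerSum 2 (n + 2) p ∂μ - 6 * ∫ p, maxGap (n + 2) p ^ 2 ∂μ ≤
      n * ∫ p, ∑ i ∈ range n, gap p (a i) ^ 2 * gap p (b i) ∂μ := by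
  have hpair (i : ℕ) (hi : i ∈ range n) :
      ∫ p, gap p (a i) ^ 2 * (1 - 3 * maxGap (n + 2) p) ∂μ ≤
        n * ∫ p, gap p (a i) ^ 2 * gap p (b i) ∂μ := by
    have hi := mem_range.1 hi
    have := h.sub_le_integral_gap_sq_mul_gap (ha_mem i hi) (hb_mem i hi) (hab i hi)
    rwa [Nat.cast_add, Nat.cast_one, add_sub_cancel_right] at this
  calc _ ≤ ∫ p, ∑ i ∈ range n, gap p (a i) ^ 2 * (1 - 3 * maxGap (n + 2) p) ∂μ := by
        rw [← integral_const_mul, ← integral_sub (h.integrable (by fun_prop))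
          (h.integrable (by fun_prop))]
        refine h.integral_mono (by fun_prop) (by fun_prop) fun p hp => ?_
        have hsub : (range n).image a ⊆ range (n + 2 + 1) := by
          intro j hj
          obtain ⟨i, hi, rfl⟩ := mem_image.1 hj
          have := mem_Icc.1 (ha_mem i (mem_range.1 hi))
          exact mem_range.2 (by lia)
        have hle : ∑ i ∈ (range n).image a, gap p i ^ 2 ≤ gapPowerSum 2 (n + 2) p :=
          sum_le_sum_of_subset_of_nonneg hsub fun i _ _ => sq_nonneg _
        have hge := hp.gapPowerSum_two_sub_le hsub
        rw [card_image_of_injOn ha, card_range] at hge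
        push_cast at hge
        rw [sum_image ha] at hle hge
        rw [← sum_mul]
        have hM := hp.maxGap_nonneg
        have h₁ := mul_le_mul_of_nonneg_left (hle.trans hp.gapPowerSum_two_le) hM
        linear_combination hge + 3 * h₁
    _ ≤ n * ∑ i ∈ range n, ∫ p, gap p (a i) ^ 2 * gap p (b i) ∂μ := by
        rw [integral_finsetSum _ fun i _ => h.integrable (by fun_prop), mul_sum]
        exact sum_le_sum hpair
    _ = _ := by rw [integral_finsetSum _ fun i _ => h.integrable (by fun_prop)]

lemma sub_le_integral_rightPairSum (h : IsConfigLaw (n + 2) μ) :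
    ∫ p, gapPowerSum 2 (n + 2) p ∂μ - 6 * ∫ p, maxGap (n + 2) p ^ 2 ∂μ ≤
      n * ∫ p, rightPairSum 2 (n + 1) p ∂μ := by
  refine (h.sub_le_integral_sum_gap_sq_mul_gap (a := fun i => i + 1) (b := fun i => i + 2)
    (add_left_injective 1).injOn (fun i hi => mem_Icc.2 (by grind))
    (fun i hi => mem_Icc.2 (by grind)) (by simp)).trans ?_
  refine mul_le_mul_of_nonneg_left (h.integral_mono (by fun_prop) (by fun_prop) fun p hp => ?_)
    n.cast_nonneg
  rw [rightPairSum, sum_range_succ']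
  exact le_add_of_nonneg_right (mul_nonneg (sq_nonneg _) (hp.gap_nonneg _))

lemma sub_le_integral_leftPairSum (h : IsConfigLaw (n + 2) μ) :
    ∫ p, gapPowerSum 2 (n + 2) p ∂μ - 6 * ∫ p, maxGap (n + 2) p ^ 2 ∂μ ≤
      n * ∫ p, leftPairSum 2 (n + 1) p ∂μ := by
  refine (h.sub_le_integral_sum_gap_sq_mul_gap (a := fun i => i + 2) (b := fun i => i + 1)
    (add_left_injective 2).injOn (fun i hi => mem_Icc.2 (by grind))
    (fun i hi => mem_Icc.2 (by grind)) (by simp)).trans ?_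
  refine mul_le_mul_of_nonneg_left (h.integral_mono (by fun_prop) (by fun_prop) fun p hp => ?_)
    n.cast_nonneg
  rw [leftPairSum, sum_range_succ]
  exact le_add_of_nonneg_right (mul_nonneg (sq_nonneg _) (hp.gap_nonneg _))

lemma le_integral_gapPowerSum_two_nextLaw (h : IsConfigLaw (n + 2) μ) :
    (n + 2) * ∫ p, gapPowerSum 2 (n + 2) p ∂μ - 12 * ∫ p, maxGap (n + 2) p ^ 2 ∂μ ≤
      n * ∫ p, gapPowerSum 2 (n + 1) p ∂nextLaw (n + 2) μ := by
  rw [h.integral_nextLaw (by fun_prop)]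
  have hstep := h.integral_mono (by fun_prop) (by fun_prop)
    fun p hp => hp.le_sum_cellLength_mul_gapPowerSum_two
  rw [integral_add (h.integrable (by fun_prop)) (h.integrable (by fun_prop)),
    integral_add (h.integrable (by fun_prop)) (h.integrable (by fun_prop))] at hstep
  linear_combination
    h.sub_le_integral_rightPairSum + h.sub_le_integral_leftPairSum + (n : ℝ) * hstep

lemma integral_gapPowerSum_two_sq_nextLaw_le (h : IsConfigLaw (n + 2) μ) :
    n * ∫ p, gapPowerSum 2 (n + 1) p ^ 2 ∂nextLaw (n + 2) μ ≤
      (n + 4) * ∫ p, gapPowerSum 2 (n + 2) p ^ 2 ∂μ +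
        12 * n * ∫ p, maxGap (n + 2) p ^ 4 ∂μ := by
  have hR := h.integral_rightPairSum_le 2 1
  have hL := h.integral_leftPairSum_le 2 1
  simp only [pow_one, Nat.reduceAdd, Nat.cast_add, Nat.cast_one, add_sub_cancel_right] at hR hL
  rw [h.integral_nextLaw (by fun_prop)]
  have hstep := h.integral_mono (by fun_prop) (by fun_prop)
    fun p hp => hp.sum_cellLength_mul_gapPowerSum_two_sq_le
  rw [integral_add (h.integrable (by fun_prop)) (h.integrable (by fun_prop)),
    integral_add (h.integrable (by fun_prop)) (h.integrable (by fun_prop)), integral_const_mul,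
    integral_add (h.integrable (by fun_prop)) (h.integrable (by fun_prop)),
    integral_const_mul] at hstep
  linear_combination (n : ℝ) * hstep + 2 * hR + 2 * hL

lemma integral_sq_mul_gapPowerSum_two_sub (h : IsConfigLaw n μ) (k c : ℝ) (m : ℕ) :
    ∫ p, (k * gapPowerSum 2 m p - c) ^ 2 ∂μ =
      k ^ 2 * ∫ p, gapPowerSum 2 m p ^ 2 ∂μ - 2 * k * c * ∫ p, gapPowerSum 2 m p ∂μ + c ^ 2 := by
  have := h.isProbabilityMeasure
  have hexp (p : ℕ → ℝ) : (k * gapPowerSum 2 m p - c) ^ 2 =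
      k ^ 2 * gapPowerSum 2 m p ^ 2 - 2 * k * c * gapPowerSum 2 m p + c ^ 2 := by ring
  simp only [hexp]
  rw [integral_add (h.integrable (by fun_prop)) (integrable_const _),
    integral_sub (h.integrable (by fun_prop)) (h.integrable (by fun_prop)), integral_const_mul,
    integral_const_mul, integral_const, probReal_univ, one_smul]

-- In the limit `c * n ^ 2 * gapPowerSum 2 n` stays near `2` for `c = 1 / N`: the two drift bounds
-- combine so that the mean squared deviation grows only through the largest gap.
lemma integral_sq_deviation_nextLaw_le (h : IsConfigLaw (n + 2) μ) {c : ℝ} (hc : 0 ≤ c) :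
    ∫ p, (c * (n + 1) * n * gapPowerSum 2 (n + 1) p - 2) ^ 2 ∂nextLaw (n + 2) μ ≤
      ∫ p, (c * (n + 2) * (n + 1) * gapPowerSum 2 (n + 2) p - 2) ^ 2 ∂μ +
        12 * c ^ 2 * (n + 1) ^ 2 * n ^ 2 * ∫ p, maxGap (n + 2) p ^ 4 ∂μ +
        48 * c * (n + 1) * ∫ p, maxGap (n + 2) p ^ 2 ∂μ := by
  rw [h.nextLaw.integral_sq_mul_gapPowerSum_two_sub, h.integral_sq_mul_gapPowerSum_two_sub]
  have h₁ := mul_le_mul_of_nonneg_left h.integral_gapPowerSum_two_sq_nextLaw_le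
    (by positivity : 0 ≤ c ^ 2 * (n + 1) ^ 2 * n)
  have h₂ := mul_le_mul_of_nonneg_left h.le_integral_gapPowerSum_two_nextLaw
    (by positivity : 0 ≤ 4 * c * (n + 1))
  have h₃ : 0 ≤ 4 * c ^ 2 * (n + 1) ^ 2 * ∫ p, gapPowerSum 2 (n + 2) p ^ 2 ∂μ := by positivity
  linear_combination h₁ + h₂ + h₃

end IsConfigLaw

/-! ### The law after several arrivals -/

/-- The law of the free points after `k` uniform arrivals, starting from `N` points with
law `μ`. -/
noncomputable def iterLaw (N : ℕ) (μ : Measure (ℕ → ℝ)) : ℕ → Measure (ℕ → ℝ)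
  | 0 => μ
  | k + 1 => nextLaw (N - k) (iterLaw N μ k)

section Steps

variable {N m k : ℕ} {η : ℝ}

lemma cast_pos_of_mul_le (hη : 0 < η) (hm : η * N ≤ N - m - 1) : (0 : ℝ) < N := by
  have : 0 ≤ η * N := by positivity
  have : (0 : ℝ) ≤ m := m.cast_nonneg
  linarith

lemma add_one_lt_of_mul_le (hη : 0 < η) (hm : η * N ≤ N - m - 1) : m + 1 < N := by
  have hpos := mul_pos hη (cast_pos_of_mul_le hη hm)
  have : (m + 1 : ℝ) < N := by linarith
  exact_mod_cast this

lemma exists_sub_eq_add_two (hη : 0 < η) (hm : η * N ≤ N - m - 1) (hk : k < m) :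
    ∃ n : ℕ, N - k = n + 2 ∧ N - (k + 1) = n + 1 ∧ η * N ≤ n := by
  have hmN := add_one_lt_of_mul_le hη hm
  obtain ⟨n, rfl⟩ : ∃ n, N = k + n + 2 := ⟨N - k - 2, by lia⟩
  refine ⟨n, by lia, by lia, hm.trans ?_⟩
  have : (k : ℝ) + 1 ≤ m := by exact_mod_cast hk
  push_cast
  linarith

end Steps

/-- The value around which the sum of the squared gaps concentrates when `k` of `N` points have
been removed. -/
noncomputable def limitGapSq (N k : ℕ) : ℝ := 2 * N / ((N - k) * (N - k - 1))

namespace IsConfigLaw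

variable {N m k : ℕ} {μ : Measure (ℕ → ℝ)} {η B : ℝ}

protected lemma iterLaw (h : IsConfigLaw N μ) (hk : k ≤ N) :
    IsConfigLaw (N - k) (iterLaw N μ k) := by
  induction k with
  | zero => exact h
  | succ k ih =>
    obtain ⟨n, hn⟩ := Nat.exists_eq_add_of_lt hk
    have ih := ih (by lia)
    rw [show N - k = n + 1 by lia] at ih
    rw [iterLaw, show N - k = n + 1 by lia, show N - (k + 1) = n by lia]
    exact ih.nextLaw

lemma integral_gapPowerSum_iterLaw_le (h : IsConfigLaw N μ) (hη : 0 < η)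
    (hm : η * N ≤ N - m - 1) {q : ℕ} (hq : q ≠ 0) (hk : k ≤ m) :
    ∫ p, gapPowerSum q (N - k) p ∂iterLaw N μ k ≤
      Real.exp (4 * q * 2 ^ q / η) * ∫ p, gapPowerSum q N p ∂μ := by
  have hN := cast_pos_of_mul_le hη hm
  have hηN : 0 < η * N := mul_pos hη hN
  set C : ℝ := 4 * q * 2 ^ q
  have hpow : ∀ k ≤ m, ∫ p, gapPowerSum q (N - k) p ∂iterLaw N μ k ≤
      Real.exp (C / (η * N)) ^ k * ∫ p, gapPowerSum q N p ∂μ := by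
    intro k hk
    induction k with
    | zero => simp [iterLaw]
    | succ k ih =>
      obtain ⟨n, hn₂, hn₁, hηn⟩ := exists_sub_eq_add_two hη hm hk
      have hlaw := h.iterLaw (N := N) (k := k) (by lia)
      rw [hn₂] at hlaw
      have hS : 0 ≤ ∫ p, gapPowerSum q (n + 2) p ∂iterLaw N μ k :=
        hlaw.integral_nonneg fun p hp => hp.gapPowerSum_nonneg q
      have hn : (0 : ℝ) < n := hηN.trans_le hηn
      have hfactor : n + C ≤ n * Real.exp (C / (η * N)) := by
        calc n + C = n * (C / n + 1) := by rw [mul_add, mul_div_cancel₀ _ hn.ne', mul_one, add_comm]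
          _ ≤ n * Real.exp (C / n) := by gcongr; exact Real.add_one_le_exp _
          _ ≤ n * Real.exp (C / (η * N)) := by gcongr
      have hstep := hlaw.integral_gapPowerSum_nextLaw_le hq
      rw [hn₁, iterLaw, hn₂, pow_succ', mul_assoc]
      refine le_of_mul_le_mul_left (hstep.trans ?_) hn
      rw [← mul_assoc (n : ℝ)]
      rw [hn₂] at ih
      gcongr
      exact ih (by lia)
  have hkN : (k : ℝ) ≤ N := by
    have : (k : ℝ) ≤ m := by exact_mod_cast hk
    linarith
  refine (hpow k hk).trans ?_
  rw [← Real.exp_nat_mul]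
  gcongr
  · exact h.integral_nonneg fun p hp => hp.gapPowerSum_nonneg q
  · calc (k : ℝ) * (C / (η * N)) ≤ N * (C / (η * N)) := by gcongr
      _ = C / η := by field_simp

lemma sqrt_pow_mul_integral_maxGap_pow_four_le (h : IsConfigLaw m μ) (N : ℕ) :
    √N ^ 7 * ∫ p, maxGap m p ^ 4 ∂μ ≤ 1 + N ^ 7 * ∫ p, gapPowerSum 8 m p ∂μ := by
  have := h.isProbabilityMeasure
  have hN : (N : ℝ) ^ 7 = √N ^ 14 := by
    rw [show 14 = 2 * 7 from rfl, pow_mul, Real.sq_sqrt N.cast_nonneg]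
  have hle := h.integral_mono (f := fun p => √N ^ 7 * maxGap m p ^ 4)
    (g := fun p => 1 + N ^ 7 * gapPowerSum 8 m p) (by fun_prop) (by fun_prop) fun p hp => by
      have hG := mul_le_mul_of_nonneg_left (hp.maxGap_pow_le 8) (by positivity : 0 ≤ (N : ℝ) ^ 7)
      rw [hN] at hG ⊢
      linarith [sq_nonneg (√N ^ 7 * maxGap m p ^ 4), sq_nonneg (√N ^ 7 * maxGap m p ^ 4 - 1)]
  rwa [integral_const_mul, integral_add (integrable_const _) (h.integrable (by fun_prop)),
    integral_const, probReal_univ, one_smul, integral_const_mul] at hle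

lemma sqrt_pow_mul_integral_maxGap_sq_le (h : IsConfigLaw m μ) (hN : N ≠ 0) :
    √N ^ 3 * ∫ p, maxGap m p ^ 2 ∂μ ≤ 2 + N ^ 7 * ∫ p, gapPowerSum 8 m p ∂μ := by
  have := h.isProbabilityMeasure
  have hsqrt : 1 ≤ √N := Real.one_le_sqrt.2 (by exact_mod_cast Nat.one_le_iff_ne_zero.2 hN)
  have hle := h.integral_mono (f := fun p => √N ^ 3 * maxGap m p ^ 2)
    (g := fun p => 1 + √N ^ 7 * maxGap m p ^ 4) (by fun_prop) (by fun_prop) fun p _ => by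
      have hM : √N ^ 6 * maxGap m p ^ 4 ≤ √N ^ 7 * maxGap m p ^ 4 := by
        gcongr
        norm_num
      linarith [sq_nonneg (√N ^ 3 * maxGap m p ^ 2), sq_nonneg (√N ^ 3 * maxGap m p ^ 2 - 1)]
  rw [integral_const_mul, integral_add (integrable_const _) (h.integrable (by fun_prop)),
    integral_const, probReal_univ, one_smul, integral_const_mul] at hle
  linarith [h.sqrt_pow_mul_integral_maxGap_pow_four_le N]

lemma integral_sq_deviation_nextLaw_le_add {n : ℕ} (h : IsConfigLaw (n + 2) μ) (hn : n + 2 ≤ N)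
    (hB : N ^ 7 * ∫ p, gapPowerSum 8 (n + 2) p ∂μ ≤ B) :
    ∫ p, ((N : ℝ)⁻¹ * (n + 1) * n * gapPowerSum 2 (n + 1) p - 2) ^ 2 ∂nextLaw (n + 2) μ ≤
      ∫ p, ((N : ℝ)⁻¹ * (n + 2) * (n + 1) * gapPowerSum 2 (n + 2) p - 2) ^ 2 ∂μ +
        (108 + 60 * B) / √N ^ 3 := by
  have hN : (0 : ℝ) < N := by exact_mod_cast (by lia : 0 < N)
  have hnN : (n : ℝ) + 2 ≤ N := by exact_mod_cast hn
  refine (h.integral_sq_deviation_nextLaw_le (inv_nonneg.2 hN.le)).trans ?_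
  rw [add_assoc]
  refine add_le_add_right ?_ _
  have h₂ := (h.sqrt_pow_mul_integral_maxGap_sq_le (by lia)).trans (add_le_add_right hB 2)
  have h₄ := (h.sqrt_pow_mul_integral_maxGap_pow_four_le N).trans (add_le_add_right hB 1)
  have hc₁ : (N : ℝ)⁻¹ * (n + 1) ≤ 1 := by
    rw [inv_mul_le_one₀ hN]
    linarith
  have hc₂ : (N : ℝ)⁻¹ ^ 2 * (n + 1) ^ 2 * n ^ 2 ≤ √N ^ 4 := by
    calc (N : ℝ)⁻¹ ^ 2 * (n + 1) ^ 2 * n ^ 2 = ((N : ℝ)⁻¹ * (n + 1)) ^ 2 * n ^ 2 := by ring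
      _ ≤ 1 ^ 2 * (N : ℝ) ^ 2 := by gcongr; linarith
      _ = √N ^ 4 := by rw [one_pow, one_mul, show 4 = 2 * 2 from rfl, pow_mul, Real.sq_sqrt hN.le]
  rw [le_div_iff₀ (by positivity)]
  calc _ = 12 * ((N : ℝ)⁻¹ ^ 2 * (n + 1) ^ 2 * n ^ 2) * (∫ p, maxGap (n + 2) p ^ 4 ∂μ) * √N ^ 3 +
        48 * ((N : ℝ)⁻¹ * (n + 1)) * (∫ p, maxGap (n + 2) p ^ 2 ∂μ) * √N ^ 3 := by ring
    _ ≤ 12 * √N ^ 4 * (∫ p, maxGap (n + 2) p ^ 4 ∂μ) * √N ^ 3 +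
        48 * 1 * (∫ p, maxGap (n + 2) p ^ 2 ∂μ) * √N ^ 3 := by gcongr
    _ ≤ 108 + 60 * B := by linear_combination 12 * h₄ + 48 * h₂

lemma integral_sq_deviation_iterLaw_le (h : IsConfigLaw N μ) (hη : 0 < η)
    (hm : η * N ≤ N - m - 1)
    (hB : ∀ k ≤ m, N ^ 7 * ∫ p, gapPowerSum 8 (N - k) p ∂iterLaw N μ k ≤ B) (hk : k ≤ m) :
    ∫ p, ((N : ℝ)⁻¹ * (N - k) * (N - k - 1) * gapPowerSum 2 (N - k) p - 2) ^ 2 ∂iterLaw N μ k ≤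
      ∫ p, ((N - 1) * gapPowerSum 2 N p - 2) ^ 2 ∂μ + (108 + 60 * B) / √N := by
  have hN := cast_pos_of_mul_le hη hm
  have hB₀ : 0 ≤ B := (hB 0 m.zero_le).trans' (mul_nonneg (by positivity)
    (h.integral_nonneg fun p hp => hp.gapPowerSum_nonneg 8))
  have hstep : ∀ k ≤ m,
      ∫ p, ((N : ℝ)⁻¹ * (N - k) * (N - k - 1) * gapPowerSum 2 (N - k) p - 2) ^ 2 ∂iterLaw N μ k ≤
        ∫ p, ((N - 1) * gapPowerSum 2 N p - 2) ^ 2 ∂μ + k * ((108 + 60 * B) / √N ^ 3) := by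
    intro k hk
    induction k with
    | zero => simp [iterLaw, inv_mul_cancel₀ hN.ne']
    | succ k ih =>
      obtain ⟨n, hn₂, hn₁, -⟩ := exists_sub_eq_add_two hη hm hk
      have hlaw := h.iterLaw (k := k) (by lia)
      have hB := hB k (by lia)
      have ih := ih (by lia)
      have hcast : (N : ℝ) - k = n + 2 := by
        rw [← Nat.cast_sub (by lia), hn₂, Nat.cast_add, Nat.cast_two]
      rw [hn₂] at hlaw ih hB
      rw [hcast, show (n : ℝ) + 2 - 1 = n + 1 by ring] at ih
      have hnext := hlaw.integral_sq_deviation_nextLaw_le_add (N := N) (by lia) hB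
      rw [hn₁, iterLaw, hn₂, Nat.cast_add, Nat.cast_one,
        show (N : ℝ) - (k + 1) = n + 1 by linarith, add_sub_cancel_right]
      linarith
  refine (hstep k hk).trans ?_
  have hkN : (k : ℝ) ≤ N := by
    have := add_one_lt_of_mul_le hη hm
    exact_mod_cast (by lia : k ≤ N)
  gcongr
  calc k * ((108 + 60 * B) / √N ^ 3) ≤ √N ^ 2 * ((108 + 60 * B) / √N ^ 3) := by
        rw [Real.sq_sqrt hN.le]
        gcongr
    _ = (108 + 60 * B) / √N := by field_simp

lemma integral_sq_gapPowerSum_sub_limitGapSq_le (h : IsConfigLaw N μ) (hη : 0 < η)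
    (hm : η * N ≤ N - m - 1)
    (hB : ∀ k ≤ m, N ^ 7 * ∫ p, gapPowerSum 8 (N - k) p ∂iterLaw N μ k ≤ B) (hk : k ≤ m) :
    N ^ 2 * ∫ p, (gapPowerSum 2 (N - k) p - limitGapSq N k) ^ 2 ∂iterLaw N μ k ≤
      (∫ p, ((N - 1) * gapPowerSum 2 N p - 2) ^ 2 ∂μ + (108 + 60 * B) / √N) / η ^ 4 := by
  have hN := cast_pos_of_mul_le hη hm
  have hηN : 0 < η * N := mul_pos hη hN
  have hkm : (k : ℝ) ≤ m := by exact_mod_cast hk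
  have hlaw := h.iterLaw (by have := add_one_lt_of_mul_le hη hm; lia : k ≤ N)
  have hn : η * N ≤ (N : ℝ) - k - 1 := by linarith
  set n : ℝ := N - k with hn_def
  have hn₀ : 0 < n := by linarith
  have hscale : η ^ 2 * N ≤ (N : ℝ)⁻¹ * n * (n - 1) := by
    calc η ^ 2 * N = (N : ℝ)⁻¹ * (η * N) * (η * N) := by field_simp
      _ ≤ (N : ℝ)⁻¹ * n * (n - 1) := by gcongr; linarith
  have hn₁ : n - 1 ≠ 0 := (hηN.trans_le hn).ne'
  rw [le_div_iff₀ (by positivity), ← integral_const_mul, ← integral_mul_const]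
  refine le_trans (hlaw.integral_mono (by fun_prop) (by fun_prop) fun p _ => ?_)
    (h.integral_sq_deviation_iterLaw_le hη hm hB hk)
  calc N ^ 2 * (gapPowerSum 2 (N - k) p - limitGapSq N k) ^ 2 * η ^ 4
    _ = (η ^ 2 * N) ^ 2 * (gapPowerSum 2 (N - k) p - limitGapSq N k) ^ 2 := by ring
    _ ≤ ((N : ℝ)⁻¹ * n * (n - 1)) ^ 2 * (gapPowerSum 2 (N - k) p - limitGapSq N k) ^ 2 := by
      gcongr
    _ = ((N : ℝ)⁻¹ * n * (n - 1) * gapPowerSum 2 (N - k) p - 2) ^ 2 := by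
      rw [limitGapSq, ← hn_def, ← mul_pow]
      field_simp

end IsConfigLaw

/-! ### Uniform points in increasing order -/

/-- The points `x` padded as in `IsConfig`. -/
noncomputable def padded {N : ℕ} (x : Fin N → ℝ) (j : ℕ) : ℝ :=
  if j = 0 then 0 else if h : j - 1 < N then x ⟨j - 1, h⟩ else 1

/-- The point `x i` reflected in the midpoint of its two neighbours. -/
noncomputable def reflectPoint {N : ℕ} (i : Fin N) (x : Fin N → ℝ) : Fin N → ℝ :=
  Function.update x i (padded x i + padded x (i + 2) - x i)

/-- The vectors `x` in the unit cube with `0 < x 0 < x 1 < ⋯ < 1`. -/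
def orderedCube (N : ℕ) : Set (Fin N → ℝ) := {x | IsConfig N (padded x)}

/-- The law of `N` independent uniform points listed in increasing order. -/
noncomputable def orderedUnif (N : ℕ) : Measure (Fin N → ℝ) :=
  (N.factorial : ℝ≥0∞) • volume.restrict (orderedCube N)

section padded

variable {N : ℕ} (x : Fin N → ℝ)

@[fun_prop]
lemma continuous_padded : Continuous (padded (N := N)) := by
  refine continuous_pi fun j => ?_
  unfold padded
  split_ifs <;> fun_prop

lemma padded_zero : padded x 0 = 0 := by simp [padded]

lemma padded_succ (i : Fin N) : padded x (i + 1) = x i := by simp [padded]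

lemma padded_of_lt {j : ℕ} (hj : N < j) : padded x j = 1 := by
  rw [padded, if_neg (by lia), dif_neg (by lia)]

lemma padded_update (i : Fin N) (v : ℝ) :
    padded (Function.update x i v) = Function.update (padded x) (i + 1) v := by
  funext j
  rcases j with _ | j
  · simp [padded]
  · simp only [padded, Function.update_apply, Fin.ext_iff]
    grind

lemma reflectAt_padded (i : Fin N) :
    reflectAt i (padded x) = padded (reflectPoint i x) := by
  rw [reflectPoint, padded_update, reflectAt, padded_succ]

lemma mem_orderedCube_iff :
    x ∈ orderedCube N ↔ StrictMono x ∧ ∀ i, x i ∈ Set.Ioo (0 : ℝ) 1 := by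
  refine ⟨fun h => ⟨fun i j hij => ?_, fun i => ⟨?_, ?_⟩⟩, fun ⟨hmono, hIoo⟩ => ?_⟩
  · rw [← padded_succ x i, ← padded_succ x j]
    exact IsConfig.lt_of_lt h i.isLt (by simpa using hij)
  · rw [← padded_succ x i, ← padded_zero x]
    exact IsConfig.lt_of_lt h N.zero_le (by lia)
  · rw [← padded_succ x i, ← padded_of_lt x N.lt_succ_self]
    exact IsConfig.lt_of_lt h i.isLt (by lia)
  · refine ⟨padded_zero x, fun j => padded_of_lt x, fun i hi => ?_⟩
    rcases i with _ | i
    · simp only [padded]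
      grind
    · have hi' : padded x (i + 1) = x ⟨i, hi⟩ := padded_succ x ⟨i, hi⟩
      rw [hi']
      rcases hi.lt_or_eq with hlt | rfl
      · have hi'' : padded x (i + 1 + 1) = x ⟨i + 1, hlt⟩ := padded_succ x ⟨i + 1, hlt⟩
        exact hi'' ▸ hmono (by simp)
      · exact padded_of_lt x (i + 1).lt_succ_self ▸ (hIoo _).2

end padded

lemma reflectAt_reflectAt (i : ℕ) (p : ℕ → ℝ) : reflectAt i (reflectAt i p) = p := by
  funext k
  simp only [reflectAt_apply]
  grind

lemma IsConfig.reflectAt {n i : ℕ} {p : ℕ → ℝ} (h : IsConfig n p) (hi : i < n) :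
    IsConfig n (reflectAt i p) := by
  have h₀ := h.lt_succ i hi.le
  have h₁ := h.lt_succ (i + 1) hi
  refine ⟨?_, fun j hj => ?_, fun j hj => ?_⟩
  · rw [reflectAt_apply, if_neg (by lia), h.zero]
  · rw [reflectAt_apply, if_neg (by lia), h.one j hj]
  · have := h.lt_succ j hj
    simp only [reflectAt_apply]
    grind

lemma isConfig_reflectAt_iff {n i : ℕ} {p : ℕ → ℝ} (hi : i < n) :
    IsConfig n (reflectAt i p) ↔ IsConfig n p :=
  ⟨fun h => reflectAt_reflectAt i p ▸ h.reflectAt hi, fun h => h.reflectAt hi⟩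

lemma measurableSet_orderedCube (N : ℕ) : MeasurableSet (orderedCube N) :=
  continuous_padded.measurable (measurableSet_isConfig N)

lemma measurePreserving_reflectPoint_volume {N : ℕ} (i : Fin N) :
    MeasurePreserving (reflectPoint i) := by
  have hcont : Continuous (reflectPoint i) := by unfold reflectPoint; fun_prop
  refine ⟨hcont.measurable, Measure.ext_of_lintegral _ fun f hf => ?_⟩
  rw [lintegral_map hf hcont.measurable]
  refine lintegral_eq_of_lmarginal_eq (μ := fun _ => volume) {i} (hf.comp hcont.measurable) hf ?_
  rw [lmarginal_singleton, lmarginal_singleton]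
  funext x
  simp only [reflectPoint, padded_update, Function.update_self, Function.update_idem,
    Function.update_of_ne (show (i : ℕ) ≠ i + 1 by lia),
    Function.update_of_ne (show (i : ℕ) + 2 ≠ i + 1 by lia)]
  exact lintegral_sub_left_eq_self (fun v => f (Function.update x i v)) _

lemma measurePreserving_reflectPoint_orderedUnif {N : ℕ} (i : Fin N) :
    MeasurePreserving (reflectPoint i) (orderedUnif N) (orderedUnif N) := by
  have h := (measurePreserving_reflectPoint_volume i).restrict_preimage
    (measurableSet_orderedCube N)
  have hpre : reflectPoint i ⁻¹' orderedCube N = orderedCube N := by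
    ext x
    simp only [orderedCube, Set.mem_preimage, Set.mem_ofPred_eq, ← reflectAt_padded]
    exact isConfig_reflectAt_iff i.isLt
  rw [hpre] at h
  exact h.smul_measure _

instance isProbabilityMeasure_restrict_Icc :
    IsProbabilityMeasure (volume.restrict (Set.Icc (0 : ℝ) 1)) := ⟨by simp⟩

instance isProbabilityMeasure_unifCube (N : ℕ) : IsProbabilityMeasure (unifCube N) := by
  unfold unifCube
  infer_instance

lemma unifCube_eq_restrict (N : ℕ) :
    unifCube N = volume.restrict (Set.univ.pi fun _ => Set.Icc 0 1) := by
  rw [unifCube, volume_pi, Measure.restrict_pi_pi]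

lemma ae_injective_volume {ι : Type*} [Fintype ι] :
    ∀ᵐ x : ι → ℝ, Function.Injective x := by
  classical
  have hne : ∀ i j : ι, i ≠ j → ∀ᵐ x : ι → ℝ, x i ≠ x j := by
    intro i j hij
    let L : (ι → ℝ) →ₗ[ℝ] ℝ :=
      (LinearMap.proj i : (ι → ℝ) →ₗ[ℝ] ℝ) - LinearMap.proj j
    have hL : LinearMap.ker L ≠ ⊤ := fun h => by
      have : (Pi.single i 1 : ι → ℝ) ∈ LinearMap.ker L := h ▸ Submodule.mem_top
      simp [L, hij.symm] at this
    rw [ae_iff]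
    convert Measure.addHaar_submodule volume (LinearMap.ker L) hL using 2
    ext x
    simp [L, sub_eq_zero]
  have hall : ∀ᵐ x : ι → ℝ, ∀ i j, i ≠ j → x i ≠ x j := by
    simpa only [ae_all_iff] using hne
  filter_upwards [hall] with x hx i j hij
  exact not_imp_not.1 (hx i j) hij

lemma ae_mem_Ioo_unifCube (N : ℕ) : ∀ᵐ x ∂unifCube N, ∀ i, x i ∈ Set.Ioo (0 : ℝ) 1 := by
  refine ae_all_iff.2 fun i => ?_
  have h : ∀ᵐ y ∂(volume : Measure ℝ).restrict (Set.Icc 0 1), y ∈ Set.Ioo (0 : ℝ) 1 := by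
    rw [← Measure.restrict_congr_set Ioo_ae_eq_Icc]
    exact ae_restrict_mem measurableSet_Ioo
  exact Measure.tendsto_eval_ae_ae.eventually h

/-- The action of `σ` on vectors by permuting coordinates. -/
def permEquiv {N : ℕ} (σ : Equiv.Perm (Fin N)) : (Fin N → ℝ) ≃ᵐ (Fin N → ℝ) :=
  MeasurableEquiv.arrowCongr' σ.symm (MeasurableEquiv.refl ℝ)

lemma permEquiv_apply {N : ℕ} (σ : Equiv.Perm (Fin N)) (x : Fin N → ℝ) :
    permEquiv σ x = x ∘ σ := rfl

lemma measurePreserving_permEquiv {N : ℕ} (σ : Equiv.Perm (Fin N)) :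
    MeasurePreserving (permEquiv σ) (unifCube N) (unifCube N) :=
  measurePreserving_arrowCongr' _ _ _ _ fun _ => .id _

lemma unifCube_restrict_orderedCube (N : ℕ) :
    (unifCube N).restrict (orderedCube N) = volume.restrict (orderedCube N) := by
  rw [unifCube_eq_restrict, Measure.restrict_restrict (measurableSet_orderedCube N),
    Set.inter_eq_left.2]
  exact fun x hx i _ => Set.Ioo_subset_Icc_self (((mem_orderedCube_iff x).1 hx).2 i)

lemma unifCube_eq_sum_restrict (N : ℕ) :
    unifCube N = Measure.sum fun σ : Equiv.Perm (Fin N) =>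
      (unifCube N).restrict (permEquiv σ ⁻¹' orderedCube N) := by
  have hdisj : Pairwise (Function.onFun Disjoint fun σ : Equiv.Perm (Fin N) =>
      permEquiv σ ⁻¹' orderedCube N) := by
    refine fun σ τ hστ => Set.disjoint_left.2 fun x hσ hτ => hστ ?_
    have hσ' := ((mem_orderedCube_iff _).1 hσ).1
    have hτ' := ((mem_orderedCube_iff _).1 hτ).1
    rw [permEquiv_apply] at hσ' hτ'
    have hinj : Function.Injective x := (σ.injective_comp x).1 hσ'.injective
    ext1 i
    exact hinj (congrFun (Tuple.unique_monotone hσ'.monotone hτ'.monotone) i)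
  have hcover : ∀ᵐ x ∂unifCube N, x ∈ ⋃ σ, permEquiv σ ⁻¹' orderedCube N := by
    have hinj : ∀ᵐ x ∂unifCube N, Function.Injective x :=
      unifCube_eq_restrict N ▸ ae_restrict_of_ae ae_injective_volume
    filter_upwards [hinj, ae_mem_Ioo_unifCube N] with x hx hIoo
    refine Set.mem_iUnion.2 ⟨Tuple.sort x, (mem_orderedCube_iff _).2 ⟨?_, fun i => hIoo _⟩⟩
    exact (Tuple.monotone_sort x).strictMono_of_injective (hx.comp (Tuple.sort x).injective)
  conv_lhs => rw [← Measure.restrict_eq_self_of_ae_mem hcover]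
  exact Measure.restrict_iUnion hdisj fun σ =>
    (permEquiv σ).measurable (measurableSet_orderedCube N)

lemma unifCube_prod_eq_orderedUnif_prod {β : Type*} [MeasurableSpace β] {N : ℕ} (κ : Measure β)
    [SFinite κ] {E : Set ((Fin N → ℝ) × β)}
    (hE : ∀ (σ : Equiv.Perm (Fin N)) x b, (x ∘ σ, b) ∈ E ↔ (x, b) ∈ E) :
    ((unifCube N).prod κ) E = ((orderedUnif N).prod κ) E := by
  have hperm (σ : Equiv.Perm (Fin N)) :
      (((unifCube N).restrict (permEquiv σ ⁻¹' orderedCube N)).prod κ) E =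
        ((volume.restrict (orderedCube N)).prod κ) E := by
    have h := ((measurePreserving_permEquiv σ).restrict_preimage
      (measurableSet_orderedCube N)).prod (MeasurePreserving.id κ)
    rw [unifCube_restrict_orderedCube] at h
    have h' : MeasurePreserving ((permEquiv σ).prodCongr (.refl β)) _ _ := h
    rw [← h'.measure_preimage_equiv E]
    congr 1
    ext ⟨x, b⟩
    exact (hE σ x b).symm
  rw [unifCube_eq_sum_restrict, Measure.prod_sum_left, Measure.sum_fintype,
    Measure.finsetSum_apply, Finset.sum_congr rfl fun σ _ => hperm σ, orderedUnif,
    Measure.prod_smul_left, Measure.smul_apply]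
  simp [Fintype.card_perm]

lemma unifCube_eq_orderedUnif {N : ℕ} {E : Set (Fin N → ℝ)}
    (hE : ∀ (σ : Equiv.Perm (Fin N)) x, x ∘ σ ∈ E ↔ x ∈ E) :
    unifCube N E = orderedUnif N E := by
  have h := unifCube_prod_eq_orderedUnif_prod (Measure.dirac ()) (E := E ×ˢ Set.univ)
    fun σ x b => by simpa using hE σ x
  simpa only [Measure.prod_prod, measure_univ, mul_one] using h

instance isProbabilityMeasure_orderedUnif (N : ℕ) : IsProbabilityMeasure (orderedUnif N) :=
  ⟨by rw [← unifCube_eq_orderedUnif (by simp), measure_univ]⟩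

lemma ae_mem_orderedCube (N : ℕ) : ∀ᵐ x ∂orderedUnif N, x ∈ orderedCube N :=
  Measure.ae_smul_measure (ae_restrict_mem (measurableSet_orderedCube N)) _

/-- The law of the initial configuration of free points. -/
noncomputable def initialLaw (N : ℕ) : Measure (ℕ → ℝ) := (orderedUnif N).map padded

lemma measurePreserving_padded (N : ℕ) :
    MeasurePreserving padded (orderedUnif N) (initialLaw N) :=
  ⟨continuous_padded.measurable, rfl⟩

lemma gapExchangeable_initialLaw (N : ℕ) : GapExchangeable 0 N (initialLaw N) := by
  refine fun i _ hi => .of_semiconj (measurePreserving_padded N)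
    (measurePreserving_reflectPoint_orderedUnif ⟨i, hi⟩)
    (fun x => (reflectAt_padded x ⟨i, hi⟩).symm) (by fun_prop)

lemma isConfigLaw_initialLaw (N : ℕ) : IsConfigLaw N (initialLaw N) where
  isProbabilityMeasure :=
    Measure.isProbabilityMeasure_map continuous_padded.aemeasurable
  ae_isConfig := (ae_map_iff continuous_padded.aemeasurable (measurableSet_isConfig N)).2
    (ae_mem_orderedCube N)
  gapExchangeable := (gapExchangeable_initialLaw N).mono (by lia) (by lia)

/-! ### Moments of the initial gaps -/

section moments

variable {Ω : Type*} [MeasurableSpace Ω] {μ : Measure Ω} {f g : Ω → ℝ}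

lemma lintegral_rpow_mul_one_sub_rpow {a b : ℝ} (ha : 0 < a) (hb : 0 < b) :
    ∫⁻ s in Set.Ioo (0 : ℝ) 1, ENNReal.ofReal (s ^ (a - 1) * (1 - s) ^ (b - 1)) =
      ENNReal.ofReal (ProbabilityTheory.beta a b) := by
  have hβ := ProbabilityTheory.beta_pos ha hb
  have h := ProbabilityTheory.lintegral_betaPDF_eq_one ha hb
  simp only [ProbabilityTheory.lintegral_betaPDF, mul_assoc,
    ENNReal.ofReal_mul (one_div_nonneg.2 hβ.le)] at h
  rw [lintegral_const_mul' _ _ ENNReal.ofReal_ne_top, one_div, ENNReal.ofReal_inv_of_pos hβ] at h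
  rw [← inv_inv (ENNReal.ofReal (ProbabilityTheory.beta a b))]
  refine ENNReal.eq_inv_of_mul_eq_one_left ?_
  rwa [mul_comm] at h

lemma mul_beta_natCast_add_one (q N : ℕ) :
    (q + 1) * ProbabilityTheory.beta (q + 1) (N + 1) = ((N + (q + 1)).choose (q + 1) : ℝ)⁻¹ := by
  rw [ProbabilityTheory.beta, Real.Gamma_nat_eq_factorial, Real.Gamma_nat_eq_factorial,
    show (q + 1 + (N + 1) : ℝ) = (N + (q + 1) : ℕ) + 1 by push_cast; ring,
    Real.Gamma_nat_eq_factorial, Nat.add_choose,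
    Nat.cast_div (Nat.factorial_mul_factorial_dvd_factorial_add N (q + 1)) (by positivity)]
  push_cast [Nat.factorial_succ]
  field_simp

lemma integral_pow_of_measure_lt_eq {N : ℕ} (hN : N ≠ 0) (hf : Measurable f) (hf₀ : 0 ≤ᵐ[μ] f)
    (htail : ∀ s, 0 ≤ s → μ {ω | s < f ω} = ENNReal.ofReal (1 - s) ^ N) {q : ℕ} (hq : q ≠ 0) :
    ∫ ω, f ω ^ q ∂μ = ((N + q).choose q : ℝ)⁻¹ := by
  obtain ⟨q, rfl⟩ := Nat.exists_eq_succ_of_ne_zero hq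
  have hq₀ : (0 : ℝ) < (q + 1 : ℕ) := by positivity
  have htail' (s : ℝ) (hs : s ∈ Set.Ioi (0 : ℝ)) :
      μ {ω | s < f ω} * ENNReal.ofReal (s ^ (((q + 1 : ℕ) : ℝ) - 1)) =
        (Set.Iio 1).indicator (fun s => ENNReal.ofReal
          (s ^ (((q + 1 : ℕ) : ℝ) - 1) * (1 - s) ^ (((N + 1 : ℕ) : ℝ) - 1))) s := by
    rw [Set.mem_Ioi] at hs
    rcases lt_or_ge s 1 with h | h
    · have h' : 0 ≤ 1 - s := by linarith
      rw [htail s hs.le, Set.indicator_of_mem (Set.mem_Iio.2 h), ← ENNReal.ofReal_pow h',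
        ← ENNReal.ofReal_mul (pow_nonneg h' N), mul_comm]
      simp
    · rw [htail s hs.le, Set.indicator_of_notMem (Set.notMem_Iio.2 h),
        ENNReal.ofReal_of_nonpos (sub_nonpos.2 h), zero_pow hN, zero_mul]
  have h := lintegral_rpow_eq_lintegral_meas_lt_mul μ hf₀ hf.aemeasurable hq₀
  rw [setLIntegral_congr_fun measurableSet_Ioi htail', setLIntegral_indicator measurableSet_Iio,
    Set.Iio_inter_Ioi, lintegral_rpow_mul_one_sub_rpow hq₀ (by positivity),
    ← ENNReal.ofReal_mul hq₀.le] at h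
  simp only [Real.rpow_natCast] at h
  rw [integral_eq_lintegral_of_nonneg_ae (hf₀.mono fun ω hω => pow_nonneg hω _)
    (hf.pow_const _).aestronglyMeasurable, h]
  push_cast
  rw [mul_beta_natCast_add_one, ENNReal.toReal_ofReal (by positivity)]

lemma lintegral_rpow_le_of_measure_lt_le {ν : Measure Ω} (hf : Measurable f) (hμ : 0 ≤ᵐ[μ] f)
    (hν : 0 ≤ᵐ[ν] f) {c : ℝ≥0∞} (h : ∀ s > 0, μ {ω | s < f ω} ≤ c * ν {ω | s < f ω})
    {a : ℝ} (ha : 0 < a) :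
    ∫⁻ ω, ENNReal.ofReal (f ω ^ a) ∂μ ≤ c * ∫⁻ ω, ENNReal.ofReal (f ω ^ a) ∂ν := by
  rw [← smul_eq_mul, ← lintegral_smul_measure,
    lintegral_rpow_eq_lintegral_meas_lt_mul μ hμ hf.aemeasurable ha,
    lintegral_rpow_eq_lintegral_meas_lt_mul (c • ν) (Measure.ae_smul_measure hν c)
      hf.aemeasurable ha]
  gcongr _ * ?_
  exact setLIntegral_mono' measurableSet_Ioi fun s hs => mul_le_mul_left (h s hs) _

lemma lintegral_rpow_mul_rpow_le (hf : Measurable f) (hg : Measurable g) (hf₀ : 0 ≤ᵐ[μ] f)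
    (hg₀ : 0 ≤ᵐ[μ] g) (h : ∀ s > 0, ∀ u > 0,
      μ {ω | s < f ω ∧ u < g ω} ≤ μ {ω | s < f ω} * μ {ω | u < g ω})
    {a b : ℝ} (ha : 0 < a) (hb : 0 < b) :
    ∫⁻ ω, ENNReal.ofReal (g ω ^ b) * ENNReal.ofReal (f ω ^ a) ∂μ ≤
      (∫⁻ ω, ENNReal.ofReal (g ω ^ b) ∂μ) * ∫⁻ ω, ENNReal.ofReal (f ω ^ a) ∂μ := by
  have hw : Measurable fun ω => ENNReal.ofReal (g ω ^ b) := by fun_prop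
  have hrestrict (s : ℝ) (hs : 0 < s) :
      ∫⁻ ω in {ω | s < f ω}, ENNReal.ofReal (g ω ^ b) ∂μ ≤
        μ {ω | s < f ω} * ∫⁻ ω, ENNReal.ofReal (g ω ^ b) ∂μ := by
    refine lintegral_rpow_le_of_measure_lt_le hg (ae_restrict_of_ae hg₀) hg₀ (fun u hu => ?_) hb
    rw [Measure.restrict_apply (measurableSet_lt measurable_const hg), Set.inter_comm]
    exact h s hs u hu
  calc _ = ∫⁻ ω, ENNReal.ofReal (f ω ^ a) ∂μ.withDensity fun ω => ENNReal.ofReal (g ω ^ b) :=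
        (lintegral_withDensity_eq_lintegral_mul _ hw (by fun_prop)).symm
    _ ≤ _ := by
        refine lintegral_rpow_le_of_measure_lt_le hf
          ((withDensity_absolutelyContinuous _ _).ae_le hf₀) hf₀ (fun s hs => ?_) ha
        rw [withDensity_apply _ (measurableSet_lt measurable_const hf), mul_comm]
        exact hrestrict s hs

lemma integral_pow_mul_pow_le (hf : Measurable f) (hg : Measurable g)
    (hf₀ : 0 ≤ᵐ[μ] f) (hg₀ : 0 ≤ᵐ[μ] g) (h : ∀ s > 0, ∀ u > 0,
      μ {ω | s < f ω ∧ u < g ω} ≤ μ {ω | s < f ω} * μ {ω | u < g ω})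
    {q r : ℕ} (hq : q ≠ 0) (hr : r ≠ 0) (hfi : Integrable (fun ω => f ω ^ q) μ)
    (hgi : Integrable (fun ω => g ω ^ r) μ) :
    ∫ ω, g ω ^ r * f ω ^ q ∂μ ≤ (∫ ω, g ω ^ r ∂μ) * ∫ ω, f ω ^ q ∂μ := by
  have hf₀' : 0 ≤ᵐ[μ] fun ω => f ω ^ q := hf₀.mono fun ω hω => pow_nonneg hω q
  have hg₀' : 0 ≤ᵐ[μ] fun ω => g ω ^ r := hg₀.mono fun ω hω => pow_nonneg hω r
  have hl := lintegral_rpow_mul_rpow_le hf hg hf₀ hg₀ h (a := q) (b := r) (by positivity)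
    (by positivity)
  simp only [Real.rpow_natCast] at hl
  rw [← ofReal_integral_eq_lintegral_ofReal hfi hf₀',
    ← ofReal_integral_eq_lintegral_ofReal hgi hg₀', ← ENNReal.ofReal_mul
      (integral_nonneg_of_ae hg₀')] at hl
  have hfg₀ : 0 ≤ᵐ[μ] fun ω => g ω ^ r * f ω ^ q := by
    filter_upwards [hf₀', hg₀'] with ω h₁ h₂ using mul_nonneg h₂ h₁
  rw [integral_eq_lintegral_of_nonneg_ae hfg₀ (by fun_prop)]
  refine ENNReal.toReal_le_of_le_ofReal
    (mul_nonneg (integral_nonneg_of_ae hg₀') (integral_nonneg_of_ae hf₀')) (le_trans ?_ hl)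
  exact lintegral_mono_ae (hg₀'.mono fun ω hω => (ENNReal.ofReal_mul hω).le)

end moments

lemma initialLaw_lt_gap {N : ℕ} (hN : N ≠ 0) {s u : ℝ} (hs : 0 ≤ s) (hu : 0 ≤ u) :
    initialLaw N {p | s < gap p 0 ∧ u < gap p N} = ENNReal.ofReal (1 - s - u) ^ N := by
  obtain ⟨n, rfl⟩ := Nat.exists_eq_succ_of_ne_zero hN
  have hE : MeasurableSet {p : ℕ → ℝ | s < gap p 0 ∧ u < gap p (n + 1)} :=
    (measurableSet_lt measurable_const (continuous_gap 0).measurable).inter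
      (measurableSet_lt measurable_const (continuous_gap (n + 1)).measurable)
  have hpreimage : padded ⁻¹' {p | s < gap p 0 ∧ u < gap p (n + 1)} =ᵐ[orderedUnif (n + 1)]
      {x | ∀ i, x i ∈ Set.Ioo s (1 - u)} := by
    filter_upwards [ae_mem_orderedCube (n + 1)] with x hx
    have hmono := ((mem_orderedCube_iff x).1 hx).1.monotone
    have hfirst : gap (padded x) 0 = x 0 := by
      rw [gap, padded_zero, sub_zero]
      exact padded_succ x 0
    have hlast : gap (padded x) (n + 1) = 1 - x (Fin.last n) := by
      rw [gap, padded_of_lt x (Nat.lt_succ_self _)]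
      congr 1
      exact padded_succ x (Fin.last n)
    refine propext ?_
    change (s < gap (padded x) 0 ∧ u < gap (padded x) (n + 1)) ↔ _
    rw [hfirst, hlast, lt_sub_comm]
    exact ⟨fun h i => ⟨h.1.trans_le (hmono (Fin.zero_le i)),
      (hmono (Fin.le_last i)).trans_lt h.2⟩, fun h => ⟨(h 0).1, (h (Fin.last n)).2⟩⟩
  have hperm (σ : Equiv.Perm (Fin (n + 1))) (x : Fin (n + 1) → ℝ) :
      x ∘ σ ∈ {x : Fin (n + 1) → ℝ | ∀ i, x i ∈ Set.Ioo s (1 - u)} ↔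
        x ∈ {x : Fin (n + 1) → ℝ | ∀ i, x i ∈ Set.Ioo s (1 - u)} :=
    σ.forall_congr_right (q := fun i => x i ∈ Set.Ioo s (1 - u))
  have hpi : {x : Fin (n + 1) → ℝ | ∀ i, x i ∈ Set.Ioo s (1 - u)} =
      Set.univ.pi fun _ => Set.Ioo s (1 - u) := by
    ext; simp
  have hsub : Set.Ioo s (1 - u) ⊆ Set.Icc 0 1 := fun v hv =>
    ⟨hs.trans hv.1.le, hv.2.le.trans (sub_le_self 1 hu)⟩
  rw [initialLaw, Measure.map_apply continuous_padded.measurable hE, measure_congr hpreimage,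
    ← unifCube_eq_orderedUnif hperm, hpi, unifCube, Measure.pi_pi]
  simp [Measure.restrict_apply measurableSet_Ioo, Set.inter_eq_left.2 hsub, sub_right_comm]

section initialMoments

variable {N : ℕ}

lemma ae_gap_pos_initialLaw {i : ℕ} (hi : i ≤ N) : ∀ᵐ p ∂initialLaw N, 0 < gap p i := by
  filter_upwards [(isConfigLaw_initialLaw N).ae_isConfig] with p hp
  exact sub_pos.2 (hp.lt_succ i hi)

lemma initialLaw_lt_gap_zero (hN : N ≠ 0) {s : ℝ} (hs : 0 ≤ s) :
    initialLaw N {p | s < gap p 0} = ENNReal.ofReal (1 - s) ^ N := by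
  rw [← sub_zero (1 - s), ← initialLaw_lt_gap hN hs le_rfl]
  refine measure_congr ?_
  filter_upwards [ae_gap_pos_initialLaw le_rfl] with p hp
  exact propext (and_iff_left hp).symm

lemma initialLaw_lt_gap_last (hN : N ≠ 0) {u : ℝ} (hu : 0 ≤ u) :
    initialLaw N {p | u < gap p N} = ENNReal.ofReal (1 - u) ^ N := by
  rw [← sub_zero (1 : ℝ), ← initialLaw_lt_gap hN le_rfl hu]
  refine measure_congr ?_
  filter_upwards [ae_gap_pos_initialLaw N.zero_le] with p hp
  exact propext (and_iff_right hp).symm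

lemma integral_gap_pow_initialLaw (hN : N ≠ 0) {i : ℕ} (hi : i ≤ N) {q : ℕ} (hq : q ≠ 0) :
    ∫ p, gap p i ^ q ∂initialLaw N = ((N + q).choose q : ℝ)⁻¹ := by
  have hswap := (gapExchangeable_initialLaw N).integral_gap_comp_swap
    (left_mem_Icc.2 N.zero_le) (mem_Icc.2 ⟨i.zero_le, hi⟩) (F := fun g => g i ^ q) (by fun_prop)
  simp only [Function.comp_apply, Equiv.swap_apply_right] at hswap
  rw [← hswap]
  exact integral_pow_of_measure_lt_eq hN (continuous_gap 0).measurable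
    ((ae_gap_pos_initialLaw N.zero_le).mono fun p hp => hp.le)
    (fun s hs => initialLaw_lt_gap_zero hN hs) hq

lemma integral_gap_zero_sq_mul_gap_last_sq_le (hN : N ≠ 0) :
    ∫ p, gap p 0 ^ 2 * gap p N ^ 2 ∂initialLaw N ≤ (((N + 2).choose 2 : ℝ)⁻¹) ^ 2 := by
  have hlaw := isConfigLaw_initialLaw N
  have hdep (s : ℝ) (hs : 0 < s) (u : ℝ) (hu : 0 < u) :
      initialLaw N {p | s < gap p N ∧ u < gap p 0} ≤
        initialLaw N {p | s < gap p N} * initialLaw N {p | u < gap p 0} := by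
    simp only [and_comm (a := s < _)]
    rw [initialLaw_lt_gap hN hu.le hs.le, initialLaw_lt_gap_last hN hs.le,
      initialLaw_lt_gap_zero hN hu.le, ← mul_pow]
    gcongr
    rcases le_total s 1 with h | h
    · rw [← ENNReal.ofReal_mul (sub_nonneg.2 h)]
      exact ENNReal.ofReal_le_ofReal (by nlinarith [mul_pos hs hu])
    · rw [ENNReal.ofReal_of_nonpos (by linarith)]
      exact zero_le
  have h := integral_pow_mul_pow_le (continuous_gap N).measurable (continuous_gap 0).measurable
    ((ae_gap_pos_initialLaw le_rfl).mono fun p hp => hp.le)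
    ((ae_gap_pos_initialLaw N.zero_le).mono fun p hp => hp.le) hdep two_ne_zero two_ne_zero
    (hlaw.integrable (by fun_prop)) (hlaw.integrable (by fun_prop))
  rwa [integral_gap_pow_initialLaw hN N.zero_le two_ne_zero,
    integral_gap_pow_initialLaw hN le_rfl two_ne_zero, ← sq] at h

lemma integral_gap_sq_mul_gap_sq_initialLaw_le (hN : N ≠ 0) {i j : ℕ} (hi : i ≤ N) (hj : j ≤ N)
    (hij : i ≠ j) :
    ∫ p, gap p i ^ 2 * gap p j ^ 2 ∂initialLaw N ≤ (((N + 2).choose 2 : ℝ)⁻¹) ^ 2 := by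
  have hswap := (gapExchangeable_initialLaw N).integral_gap_comp_swap
    (left_mem_Icc.2 N.zero_le) (mem_Icc.2 ⟨i.zero_le, hi⟩)
    (F := fun g => g i ^ 2 * g j ^ 2) (by fun_prop)
  set k := Equiv.swap 0 i j with hk
  have hk₀ : k ≠ 0 := by
    rw [← Equiv.swap_apply_right 0 i, hk]
    exact (Equiv.swap 0 i).injective.ne hij.symm
  have hkN : k ≤ N := by
    rw [hk, Equiv.swap_apply_def]
    split_ifs <;> omega
  have hswap' := (gapExchangeable_initialLaw N).integral_gap_comp_swap
    (mem_Icc.2 ⟨k.zero_le, hkN⟩) (right_mem_Icc.2 N.zero_le)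
    (F := fun g => g 0 ^ 2 * g k ^ 2) (by fun_prop)
  simp only [Function.comp_apply, Equiv.swap_apply_right, Equiv.swap_apply_left,
    Equiv.swap_apply_of_ne_of_ne hk₀.symm hN.symm, ← hk] at hswap hswap'
  rw [← hswap, ← hswap']
  exact integral_gap_zero_sq_mul_gap_last_sq_le hN

lemma integral_gapPowerSum_initialLaw (hN : N ≠ 0) {q : ℕ} (hq : q ≠ 0) :
    ∫ p, gapPowerSum q N p ∂initialLaw N = (N + 1) * ((N + q).choose q : ℝ)⁻¹ := by
  simp only [gapPowerSum]
  rw [integral_finsetSum _ fun i _ => (isConfigLaw_initialLaw N).integrable (by fun_prop),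
    sum_congr rfl fun i hi => integral_gap_pow_initialLaw hN (mem_range_succ_iff.1 hi) hq]
  simp

lemma pow_mul_integral_gapPowerSum_initialLaw_le (hN : N ≠ 0) (q : ℕ) :
    N ^ q * ∫ p, gapPowerSum (q + 1) N p ∂initialLaw N ≤ (q + 1).factorial := by
  have hchoose : (N + 1) ^ (q + 1) ≤ (q + 1).factorial * (N + (q + 1)).choose (q + 1) :=
    (Nat.pow_succ_le_ascFactorial (N + 1) (q + 1)).trans_eq
      (Nat.ascFactorial_eq_factorial_mul_choose _ _)
  have hchoose' : ((N + 1) ^ (q + 1) : ℝ) ≤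
      (q + 1).factorial * (N + (q + 1)).choose (q + 1) := mod_cast hchoose
  have hpos : (0 : ℝ) < (N + (q + 1)).choose (q + 1) := mod_cast Nat.choose_pos (by omega)
  rw [integral_gapPowerSum_initialLaw hN q.succ_ne_zero, ← mul_assoc, ← div_eq_mul_inv,
    div_le_iff₀ hpos]
  calc (N : ℝ) ^ q * (N + 1) ≤ (N + 1) ^ q * (N + 1) := by gcongr; linarith
    _ = (N + 1) ^ (q + 1) := (pow_succ _ _).symm
    _ ≤ _ := hchoose'

lemma integral_gapPowerSum_two_sq_initialLaw_le (hN : N ≠ 0) :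
    ∫ p, gapPowerSum 2 N p ^ 2 ∂initialLaw N ≤
      (N + 1) * ((N + 4).choose 4 : ℝ)⁻¹ + (N + 1) * N * (((N + 2).choose 2 : ℝ)⁻¹) ^ 2 := by
  have hlaw := isConfigLaw_initialLaw N
  have hrow (i : ℕ) (hi : i ∈ range (N + 1)) :
      ∑ j ∈ range (N + 1), ∫ p, gap p i ^ 2 * gap p j ^ 2 ∂initialLaw N ≤
        ((N + 4).choose 4 : ℝ)⁻¹ + N * (((N + 2).choose 2 : ℝ)⁻¹) ^ 2 := by
    rw [← add_sum_erase _ _ hi]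
    gcongr ?_ + ?_
    · simp only [← pow_add]
      exact (integral_gap_pow_initialLaw hN (mem_range_succ_iff.1 hi) (by norm_num)).le
    · refine (sum_le_card_nsmul _ _ _ fun j hj => integral_gap_sq_mul_gap_sq_initialLaw_le hN
        (mem_range_succ_iff.1 hi) (mem_range_succ_iff.1 (mem_of_mem_erase hj))
        (ne_of_mem_erase hj).symm).trans_eq ?_
      rw [card_erase_of_mem hi, card_range, nsmul_eq_mul, Nat.add_sub_cancel]
  calc ∫ p, gapPowerSum 2 N p ^ 2 ∂initialLaw N
      = ∑ i ∈ range (N + 1), ∑ j ∈ range (N + 1),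
          ∫ p, gap p i ^ 2 * gap p j ^ 2 ∂initialLaw N := by
        simp only [gapPowerSum, sq (Finset.sum _ _), sum_mul_sum]
        rw [integral_finsetSum _ fun _ _ => hlaw.integrable (by fun_prop)]
        exact sum_congr rfl fun _ _ =>
          integral_finsetSum _ fun j _ => hlaw.integrable (by fun_prop)
    _ ≤ _ := sum_le_card_nsmul _ _ _ hrow
    _ = _ := by rw [card_range, nsmul_eq_mul]; push_cast; ring

lemma integral_sq_deviation_initialLaw_le (hN : N ≠ 0) :
    ∫ p, ((N - 1 : ℝ) * gapPowerSum 2 N p - 2) ^ 2 ∂initialLaw N ≤ 48 / (N : ℝ) := by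
  have hN₁ : (1 : ℝ) ≤ N := mod_cast Nat.one_le_iff_ne_zero.2 hN
  have hchoose₂ : ((N + 2).choose 2 : ℝ) = (N + 2) * (N + 1) / 2 := by
    rw [Nat.cast_choose_two]; push_cast; ring
  have hchoose₄ : ((N + 4).choose 4 : ℝ) = (N + 4) * (N + 3) * (N + 2) * (N + 1) / 24 := by
    rw [add_comm N 4, Nat.cast_add_choose, div_eq_div_iff (by positivity) (by positivity)]
    push_cast [add_comm 4 N, Nat.factorial_succ]
    ring
  have hmean : ∫ p, gapPowerSum 2 N p ∂initialLaw N = 2 / (N + 2) := by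
    rw [integral_gapPowerSum_initialLaw hN two_ne_zero, hchoose₂]
    field_simp
  have hsq := integral_gapPowerSum_two_sq_initialLaw_le hN
  rw [(isConfigLaw_initialLaw N).integral_sq_mul_gapPowerSum_two_sub, hmean]
  rw [hchoose₂, hchoose₄] at hsq
  have hfourth : (N - 1 : ℝ) ^ 2 * ((N + 1) *
      ((N + 4) * (N + 3) * (N + 2) * (N + 1) / 24 : ℝ)⁻¹) ≤ 24 / N := by
    rw [show (N - 1 : ℝ) ^ 2 * ((N + 1) * ((N + 4) * (N + 3) * (N + 2) * (N + 1) / 24 : ℝ)⁻¹) =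
      24 * (N - 1) ^ 2 / ((N + 4) * (N + 3) * (N + 2)) by field_simp,
      div_le_div_iff₀ (by positivity) (by positivity)]
    nlinarith [sq_nonneg (N : ℝ)]
  have hsecond : (N - 1 : ℝ) ^ 2 * ((N + 1) * N * (((N + 2) * (N + 1) / 2 : ℝ)⁻¹) ^ 2) ≤
      (2 * (N - 1) / (N + 2)) ^ 2 := by
    rw [show (N - 1 : ℝ) ^ 2 * ((N + 1) * N * (((N + 2) * (N + 1) / 2 : ℝ)⁻¹) ^ 2) =
      (2 * (N - 1) / (N + 2)) ^ 2 * (N / (N + 1)) by field_simp]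
    exact mul_le_of_le_one_right (sq_nonneg _) (div_le_one_of_le₀ (by linarith) (by positivity))
  have hbias : (2 * (N - 1) / (N + 2) - 2 : ℝ) ^ 2 ≤ 24 / N := by
    rw [show (2 * (N - 1) / (N + 2) - 2 : ℝ) = -6 / (N + 2) by field_simp; ring, div_pow,
      div_le_div_iff₀ (by positivity) (by positivity)]
    nlinarith [sq_nonneg (N : ℝ)]
  have hsq' := mul_le_mul_of_nonneg_left hsq (sq_nonneg (N - 1 : ℝ))
  linear_combination hsq' + hfourth + hsecond + hbias

end initialMoments

/-! ### A uniform arrival -/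

section uniformArrival

variable {n : ℕ} {p : ℕ → ℝ}

lemma setIntegral_Ioc_abs_sub {a b c : ℝ} (hac : a ≤ c) (hcb : c ≤ b) :
    ∫ v in Set.Ioc a b, |c - v| = ((c - a) ^ 2 + (b - c) ^ 2) / 2 := by
  have hint (x y : ℝ) : IntervalIntegrable (fun v => |c - v|) volume x y :=
    (by fun_prop : Continuous fun v => |c - v|).intervalIntegrable x y
  have hleft : ∫ v in a..c, |c - v| = ∫ v in a..c, (c - v) :=
    intervalIntegral.integral_congr fun v hv =>
      abs_of_nonneg (sub_nonneg.2 (Set.uIcc_of_le hac ▸ hv).2)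
  have hright : ∫ v in c..b, |c - v| = ∫ v in c..b, (v - c) :=
    intervalIntegral.integral_congr fun v hv =>
      (abs_sub_comm c v).trans (abs_of_nonneg (sub_nonneg.2 (Set.uIcc_of_le hcb ▸ hv).1))
  rw [← intervalIntegral.integral_of_le (hac.trans hcb),
    ← intervalIntegral.integral_add_adjacent_intervals (hint a c) (hint c b), hleft, hright,
    intervalIntegral.integral_comp_sub_left (fun v => v) c,
    intervalIntegral.integral_comp_sub_right (fun v => v) c, integral_id, integral_id]
  ring

/-- The expected distance from a uniform point of `[0, 1]` to the nearest free point of the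
configuration `p`; the two outer gaps contribute more because each is served by one endpoint. -/
noncomputable def meanNearestDist (n : ℕ) (p : ℕ → ℝ) : ℝ :=
  (gapPowerSum 2 n p + gap p 0 ^ 2 + gap p n ^ 2) / 4

@[fun_prop]
lemma continuous_meanNearestDist (n : ℕ) : Continuous (meanNearestDist n) := by
  unfold meanNearestDist
  fun_prop

namespace IsConfig

lemma restrict_Icc_eq_sum (h : IsConfig n p) (hn : n ≠ 0) :
    volume.restrict (Set.Icc (0 : ℝ) 1) =
      ∑ i ∈ range n, volume.restrict (Set.Ioc (bisector n p i) (bisector n p (i + 1))) := by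
  have hdisj : Pairwise (Function.onFun Disjoint fun i =>
      Set.Ioc (bisector n p i) (bisector n p (i + 1))) :=
    h.bisector_mono.pairwise_disjoint_on_Ioc_succ
  have hcover : Set.Ioc (0 : ℝ) 1 =
      ⋃ i ∈ range n, Set.Ioc (bisector n p i) (bisector n p (i + 1)) := by
    refine subset_antisymm ?_ (Set.iUnion₂_subset fun i hi => Set.Ioc_subset_Ioc ?_ ?_)
    · rw [← bisector_zero n p, ← bisector_self hn p]
      exact Ioc_subset_biUnion_Ioc n (bisector n p)
    · exact (bisector_zero n p).symm.trans_le (h.bisector_mono i.zero_le)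
    · exact (h.bisector_mono (mem_range.1 hi)).trans_eq (bisector_self hn p)
  rw [← Measure.restrict_congr_set Ioc_ae_eq_Icc, hcover,
    Measure.restrict_biUnion_finset (fun i _ j _ hij => hdisj hij) fun _ => measurableSet_Ioc]
  exact Measure.sum_coe_finset (range n) fun i =>
    volume.restrict (Set.Ioc (bisector n p i) (bisector n p (i + 1)))

lemma lintegral_comp_nearestIdx (h : IsConfig n p) (hn : n ≠ 0) (f : ℕ → ℝ≥0∞) :
    ∫⁻ v in Set.Icc 0 1, f (nearestIdx n p v) =
      ∑ i ∈ range n, ENNReal.ofReal (cellLength n i p) * f i := by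
  rw [h.restrict_Icc_eq_sum hn, lintegral_finsetSum_measure]
  refine sum_congr rfl fun i hi => ?_
  rw [setLIntegral_congr_fun measurableSet_Ioc fun v hv =>
      congrArg f (h.nearestIdx_eq (mem_range.1 hi) hv), setLIntegral_const, Real.volume_Ioc,
    mul_comm, cellLength]

lemma sub_bisector (h : IsConfig n p) {i : ℕ} (hi : i < n) :
    p (i + 1) - bisector n p i = if i = 0 then gap p 0 else gap p i / 2 := by
  split_ifs with h₀
  · rw [h₀, bisector_zero, gap, h.zero]
  · rw [bisector_of_lt h₀ hi, gap]
    ring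

lemma bisector_sub (h : IsConfig n p) {i : ℕ} (hi : i < n) :
    bisector n p (i + 1) - p (i + 1) = if i + 1 = n then gap p n else gap p (i + 1) / 2 := by
  split_ifs with hn
  · rw [hn, bisector_self (by lia), gap, h.one _ n.lt_succ_self]
  · rw [bisector_of_lt i.succ_ne_zero (by lia), gap]
    ring

lemma eqOn_nearestDist (h : IsConfig n p) {i : ℕ} (hi : i < n) :
    Set.EqOn (nearestDist n p) (fun v => |p (i + 1) - v|)
      (Set.Ioc (bisector n p i) (bisector n p (i + 1))) := fun v hv => by
  rw [nearestDist, h.nearestIdx_eq hi hv]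

lemma setIntegral_cell_nearestDist (h : IsConfig n p) {i : ℕ} (hi : i < n) :
    ∫ v in Set.Ioc (bisector n p i) (bisector n p (i + 1)), nearestDist n p v =
      (gap p i ^ 2 + gap p (i + 1) ^ 2) / 8 + (if i = 0 then 3 / 8 * gap p 0 ^ 2 else 0) +
        (if i + 1 = n then 3 / 8 * gap p n ^ 2 else 0) := by
  have hleft := h.sub_bisector hi
  have hright := h.bisector_sub hi
  have hleft₀ : bisector n p i ≤ p (i + 1) := by
    rw [← sub_nonneg, hleft]
    split_ifs
    exacts [h.gap_nonneg 0, div_nonneg (h.gap_nonneg i) zero_le_two]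
  have hright₀ : p (i + 1) ≤ bisector n p (i + 1) := by
    rw [← sub_nonneg, hright]
    split_ifs
    exacts [h.gap_nonneg n, div_nonneg (h.gap_nonneg (i + 1)) zero_le_two]
  rw [setIntegral_congr_fun measurableSet_Ioc (h.eqOn_nearestDist hi),
    setIntegral_Ioc_abs_sub hleft₀ hright₀, hleft, hright]
  split_ifs <;> subst_vars <;> ring

lemma nearestDist_le_maxGap (h : IsConfig n p) (hn : n ≠ 0) {y : ℝ} (hy : y ∈ Set.Ioc 0 1) :
    nearestDist n p y ≤ maxGap n p := by
  rw [← h.zero, ← h.one (n + 1) n.lt_succ_self] at hy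
  obtain ⟨j, hj, hy⟩ := Set.mem_iUnion₂.1 (Ioc_subset_biUnion_Ioc (n + 1) p hy)
  refine le_trans ?_ (h.gap_le_maxGap j)
  rcases eq_or_ne j 0 with rfl | hj₀
  · refine (h.abs_sub_nearest_le (Nat.pos_of_ne_zero hn) y).trans ?_
    rw [gap, abs_of_nonneg (sub_nonneg.2 hy.2)]
    linarith [hy.1]
  · obtain ⟨i, rfl⟩ := Nat.exists_eq_succ_of_ne_zero hj₀
    refine (h.abs_sub_nearest_le (Nat.lt_of_succ_lt_succ (mem_range.1 hj)) y).trans ?_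
    rw [gap, abs_of_nonpos (sub_nonpos.2 hy.1.le)]
    linarith [hy.2]

lemma integral_nearestDist (h : IsConfig n p) (hn : n ≠ 0) :
    ∫ v in Set.Icc 0 1, nearestDist n p v = meanNearestDist n p := by
  have hint (i : ℕ) (hi : i ∈ range n) : Integrable (nearestDist n p)
      (volume.restrict (Set.Ioc (bisector n p i) (bisector n p (i + 1)))) :=
    (integrableOn_congr_fun (h.eqOn_nearestDist (mem_range.1 hi)) measurableSet_Ioc).2
      (by fun_prop : Continuous fun v => |p (i + 1) - v|).integrableOn_Ioc
  have hlower : ∑ i ∈ range n, gap p i ^ 2 = gapPowerSum 2 n p - gap p n ^ 2 := by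
    rw [gapPowerSum, sum_range_succ, add_sub_cancel_right]
  have hupper : ∑ i ∈ range n, gap p (i + 1) ^ 2 = gapPowerSum 2 n p - gap p 0 ^ 2 := by
    rw [gapPowerSum, sum_range_succ', add_sub_cancel_right]
  have hlast (i : ℕ) : i + 1 = n ↔ n - 1 = i := by lia
  rw [h.restrict_Icc_eq_sum hn, integral_finsetSum_measure hint,
    sum_congr rfl fun i hi => h.setIntegral_cell_nearestDist (mem_range.1 hi)]
  simp only [sum_add_distrib, ← sum_div, hlower, hupper, hlast, eq_comm (b := 0), sum_ite_eq,
    mem_range]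
  rw [if_pos (Nat.pos_of_ne_zero hn), if_pos (by lia), meanNearestDist]
  ring

lemma meanNearestDist_nonneg (h : IsConfig n p) : 0 ≤ meanNearestDist n p := by
  have := h.gapPowerSum_nonneg 2
  unfold meanNearestDist
  positivity

lemma meanNearestDist_le_maxGap (h : IsConfig n p) : meanNearestDist n p ≤ maxGap n p := by
  have hsq (i : ℕ) : gap p i ^ 2 ≤ maxGap n p :=
    (pow_le_of_le_one (h.gap_nonneg i) (h.gap_le_one i) two_ne_zero).trans (h.gap_le_maxGap i)
  unfold meanNearestDist
  linarith [h.gapPowerSum_two_le, hsq 0, hsq n, h.maxGap_nonneg]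

lemma abs_meanNearestDist_sub_le (h : IsConfig n p) :
    |meanNearestDist n p - gapPowerSum 2 n p / 4| ≤ maxGap n p ^ 2 / 2 := by
  have h₀ := pow_le_pow_left₀ (h.gap_nonneg 0) (h.gap_le_maxGap 0) 2
  have hn := pow_le_pow_left₀ (h.gap_nonneg n) (h.gap_le_maxGap n) 2
  have hdiff : meanNearestDist n p - gapPowerSum 2 n p / 4 = (gap p 0 ^ 2 + gap p n ^ 2) / 4 := by
    unfold meanNearestDist
    ring
  rw [hdiff, abs_of_nonneg (by positivity)]
  linarith [sq_nonneg (maxGap n p)]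

end IsConfig

end uniformArrival

/-! ### The process of uniform arrivals -/

section resampling

variable {ι : Type*} [Fintype ι] [DecidableEq ι] {X : ι → Type*} [∀ i, MeasurableSpace (X i)]
  (ν : ∀ i, Measure (X i)) [∀ i, IsProbabilityMeasure (ν i)]

lemma lintegral_pi_eq_lintegral_update (k : ι) {f : (∀ i, X i) → ℝ≥0∞} (hf : Measurable f) :
    ∫⁻ y, f y ∂Measure.pi ν = ∫⁻ y, ∫⁻ v, f (Function.update y k v) ∂ν k ∂Measure.pi ν := by
  have hg : Measurable fun y => ∫⁻ v, f (Function.update y k v) ∂ν k :=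
    (hf.comp measurable_update').lintegral_prod_right'
  refine lintegral_eq_of_lmarginal_eq {k} hf hg (funext fun y => ?_)
  simp [lmarginal_singleton]

lemma lintegral_prod_pi_eq {α : Type*} [MeasurableSpace α] (μ : Measure α) {k : ι}
    {f : α × (∀ i, X i) → X k → ℝ≥0∞} (hf : Measurable (Function.uncurry f))
    (hfk : ∀ a y v, f (a, Function.update y k v) = f (a, y)) :
    ∫⁻ ω, f ω (ω.2 k) ∂μ.prod (Measure.pi ν) =
      ∫⁻ ω, ∫⁻ v, f ω v ∂ν k ∂μ.prod (Measure.pi ν) := by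
  have hdiag : Measurable fun ω : α × (∀ i, X i) => f ω (ω.2 k) :=
    hf.comp (measurable_id.prodMk (by fun_prop))
  rw [lintegral_prod _ hdiag.aemeasurable,
    lintegral_prod _ (Measurable.lintegral_prod_right hf).aemeasurable]
  refine lintegral_congr fun a => ?_
  rw [lintegral_pi_eq_lintegral_update ν k (f := fun y => f (a, y) (y k))
    (hdiag.comp measurable_prodMk_left)]
  simp only [hfk, Function.update_self]

end resampling

section measurability

variable {α : Type*} [MeasurableSpace α] {n : ℕ} {f : α → ℕ → ℝ} {g : α → ℝ}

@[fun_prop]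
lemma measurable_nearestIdx (hf : Measurable f) (hg : Measurable g) :
    Measurable fun a => nearestIdx n (f a) (g a) := by
  unfold nearestIdx
  simp only [card_filter]
  refine measurable_fun_sum _ fun i _ => ?_
  exact Measurable.ite (measurableSet_lt (by fun_prop) hg) measurable_const measurable_const

@[fun_prop]
lemma measurable_nearestDist (hf : Measurable f) (hg : Measurable g) :
    Measurable fun a => nearestDist n (f a) (g a) := by
  have happly : Measurable fun w : α × ℕ => f w.1 (w.2 + 1) :=
    measurable_from_prod_countable_left fun i => (measurable_pi_apply (i + 1)).comp hf
  unfold nearestDist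
  exact continuous_abs.measurable.comp
    ((happly.comp (measurable_id.prodMk (measurable_nearestIdx hf hg))).sub hg)

@[fun_prop]
lemma measurable_mergeAt_nearestIdx (hf : Measurable f) (hg : Measurable g) :
    Measurable fun a => mergeAt (nearestIdx n (f a) (g a)) (f a) := by
  have happly : Measurable fun w : α × ℕ => mergeAt w.2 (f w.1) :=
    measurable_from_prod_countable_left fun i => (continuous_mergeAt i).measurable.comp hf
  exact happly.comp (measurable_id.prodMk (measurable_nearestIdx hf hg))

end measurability

lemma freePoints_congr {y z : ℕ → ℝ} (n : ℕ) (p : ℕ → ℝ) {k : ℕ} (hyz : ∀ i < k, y i = z i) :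
    freePoints n p y k = freePoints n p z k := by
  induction k with
  | zero => rfl
  | succ k ih =>
    rw [freePoints, freePoints, ih fun i hi => hyz i (by lia), hyz k k.lt_succ_self]

/-- The arrival sequence starting with `y`, extended by `0`. -/
noncomputable def arrivals {N : ℕ} (y : Fin N → ℝ) : ℕ → ℝ :=
  fun i => if h : i < N then y ⟨i, h⟩ else 0

/-- The free points left after `k` arrivals, for an initial configuration and a vector of
arrivals. -/
noncomputable def stateAt {N : ℕ} (k : ℕ) (ω : (ℕ → ℝ) × (Fin N → ℝ)) : ℕ → ℝ :=
  freePoints N ω.1 (arrivals ω.2) k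

/-- The total distance of the first `k` matches minus the sum of their conditional expectations
given the past: a martingale in `k`. -/
noncomputable def deviation {N : ℕ} (k : ℕ) (ω : (ℕ → ℝ) × (Fin N → ℝ)) : ℝ :=
  ∑ i ∈ range k, (nearestDist (N - i) (stateAt i ω) (arrivals ω.2 i) -
    meanNearestDist (N - i) (stateAt i ω))

section process

variable {N k : ℕ}

@[fun_prop]
lemma measurable_arrivals (i : ℕ) : Measurable fun y : Fin N → ℝ => arrivals y i := by
  unfold arrivals
  split_ifs <;> fun_prop

lemma arrivals_of_lt (y : Fin N → ℝ) (hk : k < N) : arrivals y k = y ⟨k, hk⟩ := dif_pos hk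

lemma arrivals_update_of_ne (y : Fin N → ℝ) {i : ℕ} {j : Fin N} (hij : i ≠ j) (v : ℝ) :
    arrivals (Function.update y j v) i = arrivals y i := by
  unfold arrivals
  split_ifs
  · exact Function.update_of_ne (by simpa [Fin.ext_iff] using hij) _ _
  · rfl

@[fun_prop]
lemma measurable_stateAt : Measurable (stateAt (N := N) k) := by
  unfold stateAt
  induction k with
  | zero => exact measurable_fst
  | succ k ih =>
    simp only [freePoints]
    fun_prop

@[fun_prop]
lemma measurable_deviation : Measurable (deviation (N := N) k) := by
  unfold deviation
  fun_prop

lemma stateAt_update (p : ℕ → ℝ) (y : Fin N → ℝ) {j : Fin N} (hkj : k ≤ j) (v : ℝ) :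
    stateAt k (p, Function.update y j v) = stateAt k (p, y) :=
  freePoints_congr N p fun _ hi => arrivals_update_of_ne y (hi.trans_le hkj).ne v

lemma deviation_update (p : ℕ → ℝ) (y : Fin N → ℝ) {j : Fin N} (hkj : k ≤ j) (v : ℝ) :
    deviation k (p, Function.update y j v) = deviation k (p, y) := by
  refine sum_congr rfl fun i hi => ?_
  have hij : i < (j : ℕ) := (mem_range.1 hi).trans_le hkj
  rw [stateAt_update p y hij.le, arrivals_update_of_ne y hij.ne]

variable {μ : Measure (ℕ → ℝ)}

namespace IsConfigLaw

lemma ae_isConfig_stateAt (h : IsConfigLaw N μ) (hk : k ≤ N) :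
    ∀ᵐ ω ∂μ.prod (unifCube N), IsConfig (N - k) (stateAt k ω) := by
  have := h.isProbabilityMeasure
  filter_upwards [Measure.quasiMeasurePreserving_fst.ae h.ae_isConfig] with ω hω
  exact hω.freePoints _ hk

lemma map_stateAt (h : IsConfigLaw N μ) (hk : k ≤ N) :
    (μ.prod (unifCube N)).map (stateAt k) = iterLaw N μ k := by
  have := h.isProbabilityMeasure
  induction k with
  | zero => exact measurePreserving_fst.map_eq
  | succ k ih =>
    refine Measure.ext_of_lintegral _ fun f hf => ?_
    have hcell (i : ℕ) (_ : i ∈ range (N - k)) :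
        Measurable fun p => ENNReal.ofReal (cellLength (N - k) i p) * f (mergeAt i p) := by
      fun_prop
    calc ∫⁻ p, f p ∂(μ.prod (unifCube N)).map (stateAt (k + 1))
        = ∫⁻ ω, f (mergeAt (nearestIdx (N - k) (stateAt k ω) (ω.2 ⟨k, hk⟩)) (stateAt k ω))
            ∂μ.prod (unifCube N) := by
          rw [lintegral_map hf measurable_stateAt]
          simp only [stateAt, freePoints, arrivals_of_lt _ hk]
      _ = ∫⁻ ω, (∫⁻ v in Set.Icc 0 1, f (mergeAt (nearestIdx (N - k) (stateAt k ω) v)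
            (stateAt k ω))) ∂μ.prod (unifCube N) :=
          lintegral_prod_pi_eq (fun _ => volume.restrict (Set.Icc 0 1)) μ
            (f := fun ω v => f (mergeAt (nearestIdx (N - k) (stateAt k ω) v) (stateAt k ω)))
            (hf.comp (by fun_prop)) fun p y v => by rw [stateAt_update p y (j := ⟨k, hk⟩) le_rfl]
      _ = ∫⁻ ω, ∑ i ∈ range (N - k), ENNReal.ofReal (cellLength (N - k) i (stateAt k ω)) *
            f (mergeAt i (stateAt k ω)) ∂μ.prod (unifCube N) :=
          lintegral_congr_ae <| (h.ae_isConfig_stateAt (Nat.le_of_lt hk)).mono fun ω hω =>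
            hω.lintegral_comp_nearestIdx (by lia) fun i => f (mergeAt i (stateAt k ω))
      _ = ∫⁻ p, f p ∂iterLaw N μ (k + 1) := by
          rw [iterLaw, lintegral_nextLaw _ _ hf, ← lintegral_finsetSum _ hcell, ← ih (by lia),
            lintegral_map (Finset.measurable_fun_sum _ hcell) measurable_stateAt]

lemma lintegral_ofReal_comp_stateAt (h : IsConfigLaw N μ) (hk : k ≤ N) {f : (ℕ → ℝ) → ℝ}
    (hf : Continuous f) (hf₀ : ∀ p, 0 ≤ f p) :
    ∫⁻ ω, ENNReal.ofReal (f (stateAt k ω)) ∂μ.prod (unifCube N) =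
      ENNReal.ofReal (∫ p, f p ∂iterLaw N μ k) := by
  rw [ofReal_integral_eq_lintegral_ofReal ((h.iterLaw hk).integrable hf) (.of_forall hf₀),
    ← h.map_stateAt hk, lintegral_map (by fun_prop) measurable_stateAt]

end IsConfigLaw

lemma IsConfig.lintegral_sq_add_sub_le {n : ℕ} {p : ℕ → ℝ} (h : IsConfig n p) (hn : n ≠ 0)
    (z : ℝ) :
    ∫⁻ v in Set.Icc 0 1, ENNReal.ofReal ((z + (nearestDist n p v - meanNearestDist n p)) ^ 2) ≤
      ENNReal.ofReal (z ^ 2) + ENNReal.ofReal (maxGap n p ^ 2) := by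
  have hdist : ∀ᵐ v ∂volume.restrict (Set.Icc (0 : ℝ) 1),
      nearestDist n p v ∈ Set.Icc 0 (maxGap n p) := by
    rw [← Measure.restrict_congr_set Ioc_ae_eq_Icc]
    exact (ae_restrict_mem measurableSet_Ioc).mono fun v hv =>
      ⟨abs_nonneg _, h.nearestDist_le_maxGap hn hv⟩
  have hint : Integrable (nearestDist n p) (volume.restrict (Set.Icc (0 : ℝ) 1)) :=
    .of_mem_Icc 0 (maxGap n p) (by fun_prop) hdist
  have hmean := h.meanNearestDist_le_maxGap
  have hmean₀ := h.meanNearestDist_nonneg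
  have hle : ∀ᵐ v ∂volume.restrict (Set.Icc (0 : ℝ) 1),
      (z + (nearestDist n p v - meanNearestDist n p)) ^ 2 ≤
        z ^ 2 + maxGap n p ^ 2 + 2 * z * (nearestDist n p v - meanNearestDist n p) := by
    filter_upwards [hdist] with v hv
    have habs : |nearestDist n p v - meanNearestDist n p| ≤ maxGap n p :=
      abs_le.2 ⟨by linarith [hv.1], by linarith [hv.2]⟩
    linarith [sq_le_sq' (neg_le_of_abs_le habs) (le_of_abs_le habs)]
  calc _ ≤ ∫⁻ v in Set.Icc 0 1, ENNReal.ofReal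
        (z ^ 2 + maxGap n p ^ 2 + 2 * z * (nearestDist n p v - meanNearestDist n p)) :=
        lintegral_mono_ae (hle.mono fun v hv => ENNReal.ofReal_le_ofReal hv)
    _ = ENNReal.ofReal (∫ v in Set.Icc 0 1,
        (z ^ 2 + maxGap n p ^ 2 + 2 * z * (nearestDist n p v - meanNearestDist n p))) :=
        (ofReal_integral_eq_lintegral_ofReal (by fun_prop)
          (hle.mono fun v hv => (sq_nonneg _).trans hv)).symm
    _ = _ := by
        rw [integral_add (by fun_prop) (by fun_prop), integral_const_mul,
          integral_sub hint (by fun_prop), h.integral_nearestDist hn]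
        simp [ENNReal.ofReal_add, sq_nonneg]

namespace IsConfigLaw

lemma lintegral_sq_deviation_le (h : IsConfigLaw N μ) (hk : k ≤ N) :
    ∫⁻ ω, ENNReal.ofReal (deviation k ω ^ 2) ∂μ.prod (unifCube N) ≤
      ∑ i ∈ range k, ENNReal.ofReal (∫ p, maxGap (N - i) p ^ 2 ∂iterLaw N μ i) := by
  have := h.isProbabilityMeasure
  induction k with
  | zero => simp [deviation]
  | succ k ih =>
    set f : (ℕ → ℝ) × (Fin N → ℝ) → ℝ → ℝ≥0∞ := fun ω v => ENNReal.ofReal ((deviation k ω +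
      (nearestDist (N - k) (stateAt k ω) v - meanNearestDist (N - k) (stateAt k ω))) ^ 2) with hf
    calc ∫⁻ ω, ENNReal.ofReal (deviation (k + 1) ω ^ 2) ∂μ.prod (unifCube N)
        = ∫⁻ ω, f ω (ω.2 ⟨k, hk⟩) ∂μ.prod (unifCube N) := by
          simp only [hf, deviation, sum_range_succ, arrivals_of_lt _ hk]
      _ = ∫⁻ ω, (∫⁻ v in Set.Icc 0 1, f ω v) ∂μ.prod (unifCube N) := by
          refine lintegral_prod_pi_eq (fun _ => volume.restrict (Set.Icc 0 1)) μ (f := f) ?_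
            fun p y v => ?_
          · fun_prop
          · simp only [hf, stateAt_update p y (j := ⟨k, hk⟩) le_rfl,
              deviation_update p y (j := ⟨k, hk⟩) le_rfl]
      _ ≤ ∫⁻ ω, (ENNReal.ofReal (deviation k ω ^ 2) +
            ENNReal.ofReal (maxGap (N - k) (stateAt k ω) ^ 2)) ∂μ.prod (unifCube N) :=
          lintegral_mono_ae <| (h.ae_isConfig_stateAt (Nat.le_of_lt hk)).mono fun ω hω =>
            hω.lintegral_sq_add_sub_le (by lia) _
      _ ≤ _ := by
          rw [lintegral_add_left (by fun_prop), sum_range_succ,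
            h.lintegral_ofReal_comp_stateAt (Nat.le_of_lt hk) (by fun_prop) fun _ => sq_nonneg _]
          gcongr
          exact ih (by lia)

end IsConfigLaw

end process

/-! ### Concentration of the matching length -/

/-- The limit in probability of the matching length after a fraction `t` of the arrivals. -/
noncomputable def limitLength (t : ℝ) : ℝ := (1 / 2) * (1 / (1 - t) - 1)

/-- A bound, uniform in `N`, for `N ^ 7` times the expected sum of the eighth powers of the gaps as
long as more than `η * N` points are free. -/
noncomputable def gapMomentBound (η : ℝ) : ℝ :=
  Real.exp (4 * (8 : ℕ) * 2 ^ 8 / η) * Nat.factorial 8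

/-- A bound, uniform in `N`, for `√N` times the mean square distance of the matching length from
its limit as long as more than `η * N` points are free. -/
noncomputable def meanSquareBound (η : ℝ) : ℝ :=
  2 * (2 + gapMomentBound η + ((156 + 60 * gapMomentBound η) / η ^ 4 + (1 + gapMomentBound η)))

/-- The total length of the matching after `k` arrivals. -/
noncomputable def matchLength {N : ℕ} (k : ℕ) (ω : (ℕ → ℝ) × (Fin N → ℝ)) : ℝ :=
  ∑ i ∈ range k, nearestDist (N - i) (stateAt i ω) (arrivals ω.2 i)

section concentration

variable {N m k : ℕ} {η : ℝ} {μ : Measure (ℕ → ℝ)}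

lemma sum_limitGapSq (hm : m < N) :
    ∑ k ∈ range m, limitGapSq N k / 4 = limitLength (m / N) := by
  have hN : (N : ℝ) ≠ 0 := by exact_mod_cast (by lia : N ≠ 0)
  induction m with
  | zero => simp [limitLength]
  | succ m ih =>
    have hm₁ : (N : ℝ) - m ≠ 0 := sub_ne_zero.2 (by exact_mod_cast (by lia : N ≠ m))
    have hm₂ : (N : ℝ) - m - 1 ≠ 0 := by
      rw [sub_sub]
      exact sub_ne_zero.2 (by exact_mod_cast hm.ne')
    have hm₃ : (N : ℝ) - (m + 1) ≠ 0 := by rwa [← sub_sub]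
    rw [sum_range_succ, ih (by lia), limitLength, limitLength, limitGapSq]
    push_cast
    rw [one_sub_div hN, one_sub_div hN, one_div_div, one_div_div]
    field_simp
    ring

namespace IsConfigLaw

lemma lintegral_sq_sum_stateAt_le (h : IsConfigLaw N μ) (hm : m ≤ N) {f : ℕ → (ℕ → ℝ) → ℝ}
    (hf : ∀ k, Continuous (f k)) :
    ∫⁻ ω, ENNReal.ofReal ((∑ k ∈ range m, f k (stateAt k ω)) ^ 2) ∂μ.prod (unifCube N) ≤
      ∑ k ∈ range m, ENNReal.ofReal (m * ∫ p, f k p ^ 2 ∂iterLaw N μ k) := by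
  have hcont (k : ℕ) : Continuous fun p => m * f k p ^ 2 := continuous_const.mul ((hf k).pow 2)
  have hcs (ω : (ℕ → ℝ) × (Fin N → ℝ)) : (∑ k ∈ range m, f k (stateAt k ω)) ^ 2 ≤
      ∑ k ∈ range m, m * f k (stateAt k ω) ^ 2 := by
    simpa [mul_sum] using
      sq_sum_le_card_mul_sum_sq (s := range m) (f := fun k => f k (stateAt k ω))
  calc _ ≤ ∫⁻ ω, ∑ k ∈ range m, ENNReal.ofReal (m * f k (stateAt k ω) ^ 2)
        ∂μ.prod (unifCube N) := by
        refine lintegral_mono fun ω => (ENNReal.ofReal_le_ofReal (hcs ω)).trans_eq ?_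
        exact ENNReal.ofReal_sum_of_nonneg fun _ _ => by positivity
    _ = ∑ k ∈ range m, ∫⁻ ω, ENNReal.ofReal (m * f k (stateAt k ω) ^ 2) ∂μ.prod (unifCube N) :=
        lintegral_finsetSum _ fun k _ =>
          ((hcont k).measurable.comp measurable_stateAt).ennreal_ofReal
    _ = _ := sum_congr rfl fun k hk => by
        rw [h.lintegral_ofReal_comp_stateAt ((mem_range.1 hk).le.trans hm) (hcont k)
          fun _ => by positivity, integral_const_mul]

end IsConfigLaw

lemma sum_ofReal_le {f : ℕ → ℝ} {b : ℝ} (hmN : m ≤ N) (hf : ∀ k < m, N * f k ≤ b) :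
    ∑ k ∈ range m, ENNReal.ofReal (f k) ≤ ENNReal.ofReal b := by
  rcases N.eq_zero_or_pos with rfl | hN
  · simp [Nat.le_zero.1 hmN]
  have hN' : (0 : ℝ) < N := by exact_mod_cast hN
  calc ∑ k ∈ range m, ENNReal.ofReal (f k) ≤ ∑ _ ∈ range m, ENNReal.ofReal (b / N) :=
        sum_le_sum fun k hk => ENNReal.ofReal_le_ofReal
          ((le_div_iff₀' hN').2 (hf k (mem_range.1 hk)))
    _ ≤ ∑ _ ∈ range N, ENNReal.ofReal (b / N) :=
        sum_le_sum_of_subset (range_subset_range.2 hmN)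
    _ = ENNReal.ofReal b := by
        rw [sum_const, card_range, nsmul_eq_mul, ← ENNReal.ofReal_natCast,
          ← ENNReal.ofReal_mul N.cast_nonneg, mul_div_cancel₀ _ hN'.ne']

section initialLaw

variable (hη : 0 < η) (hm : η * N ≤ N - m - 1)

include hη hm

lemma pow_mul_integral_gapPowerSum_iterLaw_le (hk : k ≤ m) :
    N ^ 7 * ∫ p, gapPowerSum 8 (N - k) p ∂iterLaw N (initialLaw N) k ≤ gapMomentBound η := by
  have hN : N ≠ 0 := by exact_mod_cast (cast_pos_of_mul_le hη hm).ne'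
  calc _ ≤ (N : ℝ) ^ 7 * (Real.exp (4 * (8 : ℕ) * 2 ^ 8 / η) *
        ∫ p, gapPowerSum 8 N p ∂initialLaw N) := by
        gcongr
        exact (isConfigLaw_initialLaw N).integral_gapPowerSum_iterLaw_le hη hm (by simp) hk
    _ = Real.exp (4 * (8 : ℕ) * 2 ^ 8 / η) * (N ^ 7 * ∫ p, gapPowerSum 8 N p ∂initialLaw N) := by
        ring
    _ ≤ _ := by
        unfold gapMomentBound
        gcongr
        exact_mod_cast pow_mul_integral_gapPowerSum_initialLaw_le hN 7

lemma mul_integral_maxGap_sq_le (hk : k ≤ m) :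
    N * ∫ p, maxGap (N - k) p ^ 2 ∂iterLaw N (initialLaw N) k ≤ (2 + gapMomentBound η) / √N := by
  have hN := cast_pos_of_mul_le hη hm
  have hmN := add_one_lt_of_mul_le hη hm
  have hlaw := (isConfigLaw_initialLaw N).iterLaw (by lia : k ≤ N)
  have hmax := hlaw.sqrt_pow_mul_integral_maxGap_sq_le (Nat.cast_pos.1 hN).ne'
  rw [le_div_iff₀ (by positivity)]
  nth_rw 1 [← Real.sq_sqrt hN.le]
  linear_combination hmax + pow_mul_integral_gapPowerSum_iterLaw_le hη hm hk

lemma sq_mul_integral_maxGap_pow_four_le (hk : k ≤ m) :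
    N ^ 2 * ∫ p, maxGap (N - k) p ^ 4 ∂iterLaw N (initialLaw N) k ≤
      (1 + gapMomentBound η) / √N := by
  have hN := cast_pos_of_mul_le hη hm
  have hmN := add_one_lt_of_mul_le hη hm
  have hlaw := (isConfigLaw_initialLaw N).iterLaw (by lia : k ≤ N)
  have hsqrt : 1 ≤ √N := Real.one_le_sqrt.2 (by exact_mod_cast Nat.cast_pos.1 hN)
  have hmax := hlaw.sqrt_pow_mul_integral_maxGap_pow_four_le N
  rw [le_div_iff₀ (by positivity)]
  calc _ = √N ^ 5 * ∫ p, maxGap (N - k) p ^ 4 ∂iterLaw N (initialLaw N) k := by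
        nth_rw 1 [← Real.sq_sqrt hN.le]
        ring
    _ ≤ √N ^ 7 * ∫ p, maxGap (N - k) p ^ 4 ∂iterLaw N (initialLaw N) k := by
        gcongr
        norm_num
    _ ≤ _ := hmax.trans (add_le_add_right
        (pow_mul_integral_gapPowerSum_iterLaw_le hη hm hk) 1)

lemma sq_mul_integral_sq_gapPowerSum_sub_le (hk : k ≤ m) :
    N ^ 2 * ∫ p, (gapPowerSum 2 (N - k) p - limitGapSq N k) ^ 2 ∂iterLaw N (initialLaw N) k ≤
      (156 + 60 * gapMomentBound η) / η ^ 4 / √N := by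
  have hN := cast_pos_of_mul_le hη hm
  have hsqrt : √N ≤ N := Real.sqrt_le_self_iff.2 (.inr (by exact_mod_cast Nat.cast_pos.1 hN))
  calc _ ≤ (∫ p, ((N - 1) * gapPowerSum 2 N p - 2) ^ 2 ∂initialLaw N +
        (108 + 60 * gapMomentBound η) / √N) / η ^ 4 :=
        (isConfigLaw_initialLaw N).integral_sq_gapPowerSum_sub_limitGapSq_le hη hm
          (fun k hk => pow_mul_integral_gapPowerSum_iterLaw_le hη hm hk) hk
    _ ≤ (48 / √N + (108 + 60 * gapMomentBound η) / √N) / η ^ 4 := by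
        gcongr
        refine (integral_sq_deviation_initialLaw_le (Nat.cast_pos.1 hN).ne').trans ?_
        gcongr
    _ = _ := by ring

lemma sq_mul_integral_sq_meanNearestDist_sub_le (hk : k ≤ m) :
    N ^ 2 * ∫ p, (meanNearestDist (N - k) p - limitGapSq N k / 4) ^ 2
        ∂iterLaw N (initialLaw N) k ≤
      ((156 + 60 * gapMomentBound η) / η ^ 4 + (1 + gapMomentBound η)) / √N := by
  have hmN := add_one_lt_of_mul_le hη hm
  have hlaw := (isConfigLaw_initialLaw N).iterLaw (by lia : k ≤ N)
  have hle := hlaw.integral_mono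
    (f := fun p => (meanNearestDist (N - k) p - limitGapSq N k / 4) ^ 2)
    (g := fun p => (gapPowerSum 2 (N - k) p - limitGapSq N k) ^ 2 + maxGap (N - k) p ^ 4)
    (by fun_prop) (by fun_prop) fun p hp => by
      have hsq := sq_le_sq.2 (hp.abs_meanNearestDist_sub_le.trans (le_abs_self _))
      linarith [sq_nonneg (meanNearestDist (N - k) p - gapPowerSum 2 (N - k) p / 4 -
        (gapPowerSum 2 (N - k) p - limitGapSq N k) / 4),
        sq_nonneg (gapPowerSum 2 (N - k) p - limitGapSq N k), sq_nonneg (maxGap (N - k) p ^ 2)]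
  rw [integral_add (hlaw.integrable (by fun_prop)) (hlaw.integrable (by fun_prop))] at hle
  rw [add_div]
  linear_combination (N : ℝ) ^ 2 * hle + sq_mul_integral_sq_gapPowerSum_sub_le hη hm hk +
    sq_mul_integral_maxGap_pow_four_le hη hm hk

end initialLaw

@[fun_prop]
lemma measurable_matchLength : Measurable (matchLength (N := N) k) := by
  unfold matchLength
  fun_prop

lemma matchLength_sub_limitLength (hm : m < N) (ω : (ℕ → ℝ) × (Fin N → ℝ)) :
    matchLength m ω - limitLength (m / N) = deviation m ω +
      ∑ k ∈ range m, (meanNearestDist (N - k) (stateAt k ω) - limitGapSq N k / 4) := by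
  simp only [matchLength, deviation, sum_sub_distrib, sum_limitGapSq hm]
  ring

lemma lintegral_sq_sum_meanNearestDist_sub_le (hη : 0 < η) (hm : η * N ≤ N - m - 1) :
    ∫⁻ ω, ENNReal.ofReal ((∑ k ∈ range m, (meanNearestDist (N - k) (stateAt k ω) -
        limitGapSq N k / 4)) ^ 2) ∂(initialLaw N).prod (unifCube N) ≤
      ENNReal.ofReal (((156 + 60 * gapMomentBound η) / η ^ 4 + (1 + gapMomentBound η)) / √N) := by
  have hmN := add_one_lt_of_mul_le hη hm
  have hcs := (isConfigLaw_initialLaw N).lintegral_sq_sum_stateAt_le (m := m) (by lia)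
    (f := fun k p => meanNearestDist (N - k) p - limitGapSq N k / 4) fun k => by fun_prop
  refine hcs.trans (sum_ofReal_le (N := N) (by lia) fun k hk => ?_)
  refine (sq_mul_integral_sq_meanNearestDist_sub_le hη hm hk.le).trans' ?_
  rw [sq, mul_assoc]
  gcongr
  lia

lemma lintegral_sq_matchLength_sub_le (hη : 0 < η) (hm : η * N ≤ N - m - 1) :
    ∫⁻ ω, ENNReal.ofReal ((matchLength m ω - limitLength (m / N)) ^ 2)
        ∂(initialLaw N).prod (unifCube N) ≤ ENNReal.ofReal (meanSquareBound η / √N) := by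
  have hmN := add_one_lt_of_mul_le hη hm
  have hB : 0 ≤ gapMomentBound η := by unfold gapMomentBound; positivity
  set bias : (ℕ → ℝ) × (Fin N → ℝ) → ℝ := fun ω =>
    ∑ k ∈ range m, (meanNearestDist (N - k) (stateAt k ω) - limitGapSq N k / 4)
  have hdev : ∫⁻ ω, ENNReal.ofReal (deviation m ω ^ 2) ∂(initialLaw N).prod (unifCube N) ≤
      ENNReal.ofReal ((2 + gapMomentBound η) / √N) :=
    ((isConfigLaw_initialLaw N).lintegral_sq_deviation_le (by lia)).trans <|
      sum_ofReal_le (by lia) fun k hk => mul_integral_maxGap_sq_le hη hm hk.le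
  calc _ ≤ ∫⁻ ω, 2 * (ENNReal.ofReal (deviation m ω ^ 2) + ENNReal.ofReal (bias ω ^ 2))
        ∂(initialLaw N).prod (unifCube N) := by
        refine lintegral_mono fun ω => ?_
        rw [matchLength_sub_limitLength (by lia), ← ENNReal.ofReal_add (by positivity)
          (by positivity), ← ENNReal.ofReal_ofNat 2, ← ENNReal.ofReal_mul zero_le_two]
        exact ENNReal.ofReal_le_ofReal add_sq_le
    _ = 2 * (∫⁻ ω, ENNReal.ofReal (deviation m ω ^ 2) ∂(initialLaw N).prod (unifCube N) +
          ∫⁻ ω, ENNReal.ofReal (bias ω ^ 2) ∂(initialLaw N).prod (unifCube N)) := by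
        rw [lintegral_const_mul' _ _ (by simp), lintegral_add_left (by fun_prop)]
    _ ≤ 2 * (ENNReal.ofReal ((2 + gapMomentBound η) / √N) + ENNReal.ofReal
          (((156 + 60 * gapMomentBound η) / η ^ 4 + (1 + gapMomentBound η)) / √N)) := by
        gcongr
        exact lintegral_sq_sum_meanNearestDist_sub_le hη hm
    _ = _ := by
        rw [← ENNReal.ofReal_add (by positivity) (by positivity), ← ENNReal.ofReal_ofNat 2,
          ← ENNReal.ofReal_mul zero_le_two, meanSquareBound]
        congr 1
        ring

lemma pointSet_padded (x : Fin N → ℝ) : pointSet N (padded x) = univ.image x := by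
  ext z
  simp [pointSet, Fin.exists_iff, ← padded_succ]

lemma closestLength_image_univ {x : Fin N → ℝ} (hx : x ∈ orderedCube N) (y : Fin N → ℝ)
    (hk : k ≤ N) : closestLength ⊤ (univ.image x) (arrivals y) k = matchLength k (padded x, y) := by
  rw [closestLength, ← pointSet_padded, IsConfig.closestState_pointSet hx _ hk]
  rfl

lemma unifCube_prod_lt_abs_closestLength_sub_le (hη : 0 < η) (hm : η * N ≤ N - m - 1) {ε : ℝ}
    (hε : 0 < ε) :
    ((unifCube N).prod (unifCube N)) {ω | ε < |closestLength ⊤ (univ.image ω.1) (arrivals ω.2) m -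
        limitLength (m / N)|} ≤
      ENNReal.ofReal (meanSquareBound η / √N / ε ^ 2) := by
  have hmN := add_one_lt_of_mul_le hη hm
  set E : Set ((ℕ → ℝ) × (Fin N → ℝ)) :=
    {ω | ENNReal.ofReal (ε ^ 2) ≤ ENNReal.ofReal ((matchLength m ω - limitLength (m / N)) ^ 2)}
  have hE : MeasurableSet E := measurableSet_le measurable_const (by fun_prop)
  have hε₂ : 0 < ε ^ 2 := by positivity
  rw [unifCube_prod_eq_orderedUnif_prod _ fun σ x b => by
    simp [← image_image, image_univ_equiv σ]]
  calc _ ≤ (orderedUnif N).prod (unifCube N) (Prod.map padded id ⁻¹' E) := by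
        refine measure_mono_ae ?_
        filter_upwards [Measure.quasiMeasurePreserving_fst.ae (ae_mem_orderedCube N)] with ω hω
          (hlt : ε < |_|)
        rw [closestLength_image_univ hω _ (by lia)] at hlt
        exact ENNReal.ofReal_le_ofReal (sq_le_sq.2 (by rw [abs_of_pos hε]; exact hlt.le))
    _ = (initialLaw N).prod (unifCube N) E :=
        ((measurePreserving_padded N).prod (.id _)).measure_preimage hE.nullMeasurableSet
    _ ≤ _ := (meas_ge_le_lintegral_div (by fun_prop) (by simp [hε.ne']) (by simp)).trans <| by
        rw [ENNReal.ofReal_div_of_pos hε₂]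
        gcongr
        exact lintegral_sq_matchLength_sub_le hη hm

end concentration

section limit

open Filter

variable {t : ℝ}

lemma tendsto_limitLength_floor (ht₀ : 0 ≤ t) (ht₁ : t < 1) :
    Tendsto (fun N : ℕ => limitLength (⌊t * N⌋₊ / N)) atTop (nhds (limitLength t)) := by
  have hfloor : Tendsto (fun N : ℕ => (⌊t * N⌋₊ : ℝ) / N) atTop (nhds t) :=
    (tendsto_nat_floor_mul_div_atTop ht₀).comp tendsto_natCast_atTop_atTop
  exact ((tendsto_const_nhds.div (hfloor.const_sub 1) (sub_pos.2 ht₁).ne').sub_const 1).const_mul _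

lemma eventually_mul_le_sub_floor (ht₀ : 0 ≤ t) (ht₁ : t < 1) :
    ∀ᶠ N : ℕ in atTop, (1 - t) / 2 * N ≤ N - ⌊t * N⌋₊ - 1 := by
  filter_upwards [tendsto_natCast_atTop_atTop.eventually_ge_atTop (2 / (1 - t))] with N hN
  rw [div_le_iff₀ (sub_pos.2 ht₁)] at hN
  linarith [Nat.floor_le (by positivity : 0 ≤ t * N)]

lemma tendsto_ofReal_div_sqrt (c d : ℝ) :
    Tendsto (fun N : ℕ => ENNReal.ofReal (c / √N / d)) atTop (nhds 0) := by
  have hsqrt : Tendsto (fun N : ℕ => √(N : ℝ)) atTop atTop :=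
    Real.tendsto_sqrt_atTop.comp tendsto_natCast_atTop_atTop
  simpa using ENNReal.tendsto_ofReal ((hsqrt.const_div_atTop c).div_const d)

end limit

end GreedyMatching

open GreedyMatching

/-- For the greedy algorithm `closest` with threshold `∞` on `N` uniform offline and
online points, the total matching length `ρ_N(t)` after `⌊tN⌋` arrivals converges in
probability to `(1/2)·(1/(1-t) − 1)` for every fixed `t ∈ [0,1)`. -/
theorem stmt8 (t : ℝ) (ht : t ∈ Set.Ico (0 : ℝ) 1) (ε : ℝ) (hε : 0 < ε) :
    Filter.Tendsto
      (fun N : ℕ =>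
        ((unifCube N).prod (unifCube N))
          {ω | ε < |closestLength ⊤
              (Finset.image ω.1 Finset.univ)
              (fun i => if h : i < N then ω.2 ⟨i, h⟩ else 0)
              ⌊t * N⌋₊
            - (1 / 2) * (1 / (1 - t) - 1)|})
      Filter.atTop (nhds 0) := by
  obtain ⟨ht₀, ht₁⟩ := ht
  have hη : 0 < (1 - t) / 2 := by linarith
  refine tendsto_of_tendsto_of_tendsto_of_le_of_le' tendsto_const_nhds
    (tendsto_ofReal_div_sqrt (meanSquareBound ((1 - t) / 2)) ((ε / 2) ^ 2))
    (.of_forall fun _ => zero_le) ?_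
  filter_upwards [Metric.tendsto_nhds.1 (tendsto_limitLength_floor ht₀ ht₁) (ε / 2) (half_pos hε),
    eventually_mul_le_sub_floor ht₀ ht₁] with N hlim hN
  refine (measure_mono fun ω hω => ?_).trans
    (unifCube_prod_lt_abs_closestLength_sub_le hη hN (half_pos hε))
  change ε < |closestLength ⊤ _ (arrivals ω.2) _ - limitLength t| at hω
  have htri := abs_sub_le (closestLength ⊤ (Finset.image ω.1 Finset.univ) (arrivals ω.2) ⌊t * N⌋₊)
    (limitLength (⌊t * N⌋₊ / N)) (limitLength t)
  rw [Real.dist_eq] at hlim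
  change ε / 2 < |_ - limitLength (_ / _)|
  linarith
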